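/- arXiv:1702.06859 — 3 statements merged into one kernel-verified Lean document; each statement's English description precedes it below -/
import Mathlib

section
/- Let T > 0 and let b, b̃, σ, σ̃ belong to the class M with σ(x) > 0 and σ̃(x) > 0 for all x. For k = 1, 2, let u_k be a classical solution of the parabolic equation associated with (b, σ, f_k) and let ũ_k be a classical solution of the parabolic equation associated with (b̃, σ̃, f_k), where f_k(x) = x^k. Suppose there exist ε ∈ (0, T) and a nonempty open set ω ⊂ ℝ such that for all t ∈ (0, ε) and all x ∈ ω one has u_1(t,x) = ũ_1(t,x) and u_2(t,x) − u_1(t,x)² = ũ_2(t,x) − ũ_1(t,x)² (equality of expectations and of variances). Then b(x) = b̃(x) and σ(x) = σ̃(x) for all x ∈ ℝ. -/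
open Set Filter

/-- A function `ψ : ℝ → ℝ` is piecewise analytic if there exist `δ > 0`, a strictly
increasing sequence `(κ j)_{j ∈ ℤ}` tending to `-∞` at `-∞` and `+∞` at `+∞` with
`κ (j+1) - κ j > δ`, and functions `φ j` analytic on `[κ j, κ (j+1)]`, such that
`ψ = φ j` on `[κ j, κ (j+1))`. -/
def PiecewiseAnalytic (ψ : ℝ → ℝ) : Prop :=
  ∃ (δ : ℝ) (κ : ℤ → ℝ) (φ : ℤ → ℝ → ℝ),
    0 < δ ∧ StrictMono κ ∧
    Tendsto κ atBot atBot ∧ Tendsto κ atTop atTop ∧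
    (∀ j : ℤ, δ < κ (j + 1) - κ j) ∧
    (∀ j : ℤ, AnalyticOn ℝ (φ j) (Icc (κ j) (κ (j + 1)))) ∧
    (∀ j : ℤ, ∀ x ∈ Ico (κ j) (κ (j + 1)), ψ x = φ j x)

/-- The class `M` of Lipschitz-continuous, piecewise analytic functions on `ℝ`. -/
def ClassM (ψ : ℝ → ℝ) : Prop :=
  (∃ K, LipschitzWith K ψ) ∧ PiecewiseAnalytic ψ

/-- `u : [0,T) × ℝ → ℝ` is a classical solution of
`∂ₜ u = (1/2) σ(x)² ∂ₓₓ u + b(x) ∂ₓ u`, `u(0, ·) = f`: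
`u`, `∂ₜ u`, `∂ₓ u`, `∂ₓₓ u` exist and are continuous on `[0,T) × ℝ`, the PDE holds
there, and the initial condition holds. -/
def IsClassicalSolution (T : ℝ) (b σ f : ℝ → ℝ) (u : ℝ → ℝ → ℝ) : Prop :=
  ContinuousOn (fun p : ℝ × ℝ => u p.1 p.2) (Ico 0 T ×ˢ univ) ∧
  (∀ t ∈ Ico 0 T, ∀ x : ℝ, DifferentiableAt ℝ (fun s => u s x) t) ∧
  (∀ t ∈ Ico 0 T, ∀ x : ℝ, DifferentiableAt ℝ (fun y => u t y) x) ∧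
  (∀ t ∈ Ico 0 T, ∀ x : ℝ, DifferentiableAt ℝ (deriv (fun y => u t y)) x) ∧
  ContinuousOn (fun p : ℝ × ℝ => deriv (fun s => u s p.2) p.1) (Ico 0 T ×ˢ univ) ∧
  ContinuousOn (fun p : ℝ × ℝ => deriv (fun y => u p.1 y) p.2) (Ico 0 T ×ˢ univ) ∧
  ContinuousOn (fun p : ℝ × ℝ => deriv (deriv (fun y => u p.1 y)) p.2) (Ico 0 T ×ˢ univ) ∧
  (∀ t ∈ Ico 0 T, ∀ x : ℝ,
    deriv (fun s => u s x) t =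
      (1 / 2) * (σ x) ^ 2 * deriv (deriv (fun y => u t y)) x
        + b x * deriv (fun y => u t y) x) ∧
  (∀ x : ℝ, u 0 x = f x)

lemma dd_hasSum_exp_sub_one (y : ℝ) :
    HasSum (fun k : ℕ => y ^ (k + 1) / ((k + 1).factorial : ℝ)) (Real.exp y - 1) := by
  have h := NormedSpace.expSeries_div_hasSum_exp (𝔸 := ℝ) y
  rw [← Real.exp_eq_exp_ℝ] at h
  have h2 := (hasSum_nat_add_iff' 1).2 h
  simpa using h2

lemma dd_lerch_aux {τ : ℝ} {h : ℝ → ℝ} (hc : ContinuousOn h (Icc 0 τ))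
    {M K : ℝ} (hM : 0 ≤ M)
    (hb : ∀ l : ℝ, 1 ≤ l → |∫ t in (0:ℝ)..τ, Real.exp (l * (τ - t)) * h t|
      ≤ M * Real.exp (K * √l)) (q : ℝ) (hq : q ∈ Ioo 0 τ) :
    ∫ t in (0:ℝ)..q, h t = 0 := by
  have hτ : 0 < τ := hq.1.trans hq.2
  obtain ⟨C, hC⟩ := isCompact_Icc.exists_bound_of_continuousOn hc
  have hC0 : 0 ≤ C := (norm_nonneg _).trans (hC 0 ⟨le_rfl, hτ.le⟩)
  have huI : Set.uIcc 0 τ = Icc 0 τ := Set.uIcc_of_le hτ.le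
  have huo : Set.uIoc 0 τ = Ioc 0 τ := Set.uIoc_of_le hτ.le
  set r := τ - q with hr
  have hr0 : 0 < r := by have := hq.2; linarith
  set M' := M * Real.exp (K ^ 2 / (2 * r)) with hM'
  have hM'0 : 0 ≤ M' := by positivity
  set I : ℕ → ℝ := fun n => ∫ t in (0:ℝ)..τ, (Real.exp (-Real.exp (n * (q - t))) - 1) * h t with hI
  have hmeas : MeasureTheory.AEStronglyMeasurable h
      (MeasureTheory.volume.restrict (Set.uIoc 0 τ)) := by
    rw [huo]
    exact (hc.mono Ioc_subset_Icc_self).aestronglyMeasurable measurableSet_Ioc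
  -- series expansion
  have hser : ∀ n : ℕ, HasSum (fun k : ℕ => ∫ t in (0:ℝ)..τ,
      ((-Real.exp (n * (q - t))) ^ (k + 1) / ((k + 1).factorial : ℝ)) * h t) (I n) := by
    intro n
    apply intervalIntegral.hasSum_integral_of_dominated_convergence
      (fun k _ => (Real.exp (n * q)) ^ (k + 1) / ((k + 1).factorial : ℝ) * C)
    · intro k
      apply MeasureTheory.AEStronglyMeasurable.mul _ hmeas
      apply Continuous.aestronglyMeasurable
      fun_prop
    · intro k
      refine Filter.Eventually.of_forall fun t ht => ?_
      rw [huo] at ht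
      rw [norm_mul, norm_div, norm_pow, norm_neg, Real.norm_eq_abs, Real.abs_exp, RCLike.norm_natCast]
      gcongr
      · have := ht.1
        linarith
      · exact hC t ⟨ht.1.le, ht.2⟩
    · refine Filter.Eventually.of_forall fun t ht => ?_
      exact ((dd_hasSum_exp_sub_one _).mul_right C).summable
    · exact intervalIntegrable_const
    · refine Filter.Eventually.of_forall fun t ht => ?_
      exact (dd_hasSum_exp_sub_one _).mul_right _
  have hbd : ∀ n : ℕ, 1 ≤ n → ‖I n‖ ≤ M' * (Real.exp (Real.exp (- (r / 2) * n)) - 1) := by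
    intro n hn
    rw [← (hser n).tsum_eq]
    apply tsum_of_norm_bounded ((dd_hasSum_exp_sub_one _).mul_left M')
    intro k
    set X : ℝ := ((k + 1 : ℕ) : ℝ) * n with hX
    have hX1 : 1 ≤ X := by
      have : 1 ≤ (k + 1) * n := Nat.mul_pos (Nat.succ_pos _) hn
      rw [hX]; exact_mod_cast this
    have e1 : (∫ t in (0:ℝ)..τ, ((-Real.exp (n * (q - t))) ^ (k + 1) / ((k + 1).factorial : ℝ)) * h t)
        = ((-1) ^ (k + 1) / ((k + 1).factorial : ℝ) * Real.exp (-(X * r))) *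
          ∫ t in (0:ℝ)..τ, Real.exp (X * (τ - t)) * h t := by
      rw [← intervalIntegral.integral_const_mul]
      congr 1
      ext t
      have : (-Real.exp (n * (q - t))) ^ (k + 1) =
          (-1) ^ (k + 1) * (Real.exp (-(X * r)) * Real.exp (X * (τ - t))) := by
        rw [← Real.exp_add, neg_pow, ← Real.exp_nat_mul, hX, hr]
        congr 2
        ring
      rw [this]
      ring
    rw [e1, norm_mul, norm_mul, norm_div, norm_pow, norm_neg, norm_one, one_pow,
      RCLike.norm_natCast, Real.norm_eq_abs, Real.norm_eq_abs, Real.abs_exp]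
    calc _ ≤ 1 / ((k + 1).factorial : ℝ) * Real.exp (-(X * r)) * (M * Real.exp (K * √X)) := by
          gcongr
          exact hb X hX1
      _ = M * (Real.exp (-(X * r) + K * √X) / ((k + 1).factorial : ℝ)) := by
          rw [Real.exp_add]; ring
      _ ≤ M * (Real.exp (K ^ 2 / (2 * r) + (k + 1 : ℕ) * (-(r / 2) * n)) / ((k + 1).factorial : ℝ)) := by
          gcongr M * (Real.exp ?_ / _)
          have hs : √X * √X = X := Real.mul_self_sqrt (by linarith)
          have h1 : K ^ 2 / (2 * r) + (k + 1 : ℕ) * (-(r / 2) * n) - (-(X * r) + K * √X)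
              = (r * √X - K) ^ 2 / (2 * r) := by
            field_simp
            rw [hX] at hs ⊢
            linear_combination (-(r^2)) * hs
          have h2 : 0 ≤ (r * √X - K) ^ 2 / (2 * r) := by positivity
          linarith
      _ = _ := by
          rw [Real.exp_add, Real.exp_nat_mul]; ring
  have hlim0 : Tendsto I atTop (nhds 0) := by
    have h1 : Tendsto (fun n : ℕ => M' * (Real.exp (Real.exp (- (r / 2) * n)) - 1)) atTop (nhds 0) := by
      have : Tendsto (fun n : ℕ => - (r / 2) * (n : ℝ)) atTop atBot :=
        tendsto_natCast_atTop_atTop.const_mul_atTop_of_neg (by linarith)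
      have h2 := Real.tendsto_exp_atBot.comp this
      have h3 := ((Real.continuous_exp.tendsto 0).comp h2)
      have h4 := (h3.sub_const 1).const_mul M'
      simpa using h4
    apply squeeze_zero_norm' _ h1
    filter_upwards [eventually_ge_atTop 1] with n hn using hbd n hn
  have hint : IntervalIntegrable h MeasureTheory.volume 0 τ := by
    apply ContinuousOn.intervalIntegrable; rwa [huI]
  have hlim : Tendsto I atTop (nhds (∫ t in (0:ℝ)..τ, if t < q then -h t else 0)) := by
    apply intervalIntegral.tendsto_integral_filter_of_dominated_convergence (fun t => ‖h t‖)
    · refine Filter.Eventually.of_forall fun n => ?_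
      apply MeasureTheory.AEStronglyMeasurable.mul _ hmeas
      apply Continuous.aestronglyMeasurable
      fun_prop
    · refine Filter.Eventually.of_forall fun n => ?_
      refine Filter.Eventually.of_forall fun t ht => ?_
      rw [norm_mul]
      apply mul_le_of_le_one_left (norm_nonneg _)
      rw [Real.norm_eq_abs, abs_le]
      constructor
      · linarith [Real.exp_pos (-Real.exp (n * (q - t)))]
      · have : Real.exp (-Real.exp (n * (q - t))) ≤ 1 :=
          Real.exp_le_one_iff.2 (by linarith [Real.exp_pos (n * (q - t))])
        linarith
    · exact hint.norm
    · have hne : ∀ᵐ t : ℝ, t ≠ q := by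
        simp [MeasureTheory.ae_iff]
      filter_upwards [hne] with t htq _
      rcases lt_or_gt_of_ne htq with h1 | h1
      · rw [if_pos h1]
        have a1 : Tendsto (fun n : ℕ => (n : ℝ) * (q - t)) atTop atTop :=
          tendsto_natCast_atTop_atTop.atTop_mul_const (by linarith)
        have a2 := tendsto_neg_atTop_atBot.comp (Real.tendsto_exp_atTop.comp a1)
        have a3 := Real.tendsto_exp_atBot.comp a2
        have a4 := (a3.sub_const 1).mul_const (h t)
        simpa using a4
      · rw [if_neg (by linarith)]
        have a1 : Tendsto (fun n : ℕ => (n : ℝ) * (q - t)) atTop atBot :=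
          tendsto_natCast_atTop_atTop.atTop_mul_const_of_neg (by linarith)
        have a2 := (Real.tendsto_exp_atBot.comp a1).neg
        have a3 := (Real.continuous_exp.tendsto _).comp a2
        have a4 := (a3.sub_const 1).mul_const (h t)
        simpa using a4
  have heq := tendsto_nhds_unique hlim hlim0
  have hi1 : IntervalIntegrable h MeasureTheory.volume 0 q := by
    apply hint.mono_set
    rw [huI, Set.uIcc_of_le hq.1.le]
    exact Icc_subset_Icc le_rfl hq.2.le
  have ae1 : ∀ᵐ t : ℝ, t ≠ q := by
    simp [MeasureTheory.ae_iff]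
  have c1 : ∫ t in (0:ℝ)..q, (if t < q then -h t else 0) = ∫ t in (0:ℝ)..q, -h t := by
    apply intervalIntegral.integral_congr_ae
    filter_upwards [ae1] with t ht h2
    rw [Set.uIoc_of_le hq.1.le] at h2
    rw [if_pos (lt_of_le_of_ne h2.2 ht)]
  have c2 : ∫ t in q..τ, (if t < q then -h t else 0) = 0 := by
    apply intervalIntegral.integral_zero_ae
    refine Filter.Eventually.of_forall fun t h2 => ?_
    rw [Set.uIoc_of_le hq.2.le] at h2
    rw [if_neg (by linarith [h2.1])]
  have i1 : IntervalIntegrable (fun t => if t < q then -h t else 0) MeasureTheory.volume 0 q := by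
    apply hi1.neg.congr_ae
    rw [Set.uIoc_of_le hq.1.le, Filter.EventuallyEq, MeasureTheory.ae_restrict_iff' measurableSet_Ioc]
    filter_upwards [ae1] with t ht h2
    rw [if_pos (lt_of_le_of_ne h2.2 ht)]
    rfl
  have i2 : IntervalIntegrable (fun t => if t < q then -h t else 0) MeasureTheory.volume q τ := by
    apply (intervalIntegrable_const (c := (0:ℝ))).congr_ae
    rw [Set.uIoc_of_le hq.2.le, Filter.EventuallyEq, MeasureTheory.ae_restrict_iff' measurableSet_Ioc]
    refine Filter.Eventually.of_forall fun t h2 => ?_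
    rw [if_neg (by linarith [h2.1])]
  rw [← intervalIntegral.integral_add_adjacent_intervals i1 i2, c1, c2,
    intervalIntegral.integral_neg] at heq
  linarith

lemma dd_lerch {τ : ℝ} {h : ℝ → ℝ} (hc : ContinuousOn h (Icc 0 τ))
    {M K : ℝ} (hM : 0 ≤ M)
    (hb : ∀ l : ℝ, 1 ≤ l → |∫ t in (0:ℝ)..τ, Real.exp (l * (τ - t)) * h t|
      ≤ M * Real.exp (K * √l)) : ∀ q ∈ Ioo 0 τ, h q = 0 := by
  intro q hq
  have h0 := dd_lerch_aux hc hM hb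
  have hca : ContinuousAt h q := hc.continuousAt (Icc_mem_nhds hq.1 hq.2)
  have hd : HasDerivAt (fun u => ∫ x in (0:ℝ)..u, h x) (h q) q := by
    apply intervalIntegral.integral_hasDerivAt_right
    · apply ContinuousOn.intervalIntegrable
      rw [Set.uIcc_of_le hq.1.le]
      exact hc.mono (Icc_subset_Icc le_rfl hq.2.le)
    · exact (hc.mono Ioo_subset_Icc_self).stronglyMeasurableAtFilter isOpen_Ioo q hq
    · exact hca
  have hd2 : HasDerivAt (fun u => ∫ x in (0:ℝ)..u, h x) 0 q := by
    apply (hasDerivAt_const q (0:ℝ)).congr_of_eventuallyEq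
    filter_upwards [Ioo_mem_nhds hq.1 hq.2] with u hu using h0 u hu
  exact hd.unique hd2

/-- Regularity package: `w`, with time derivative `wt`, first and second space derivatives
`wx`, `wxx`, all continuous on `[0,T) × ℝ`. -/
structure DDReg (T : ℝ) (w wt wx wxx : ℝ → ℝ → ℝ) : Prop where
  cw : ContinuousOn (fun p : ℝ × ℝ => w p.1 p.2) (Ico 0 T ×ˢ univ)
  cwt : ContinuousOn (fun p : ℝ × ℝ => wt p.1 p.2) (Ico 0 T ×ˢ univ)
  cwx : ContinuousOn (fun p : ℝ × ℝ => wx p.1 p.2) (Ico 0 T ×ˢ univ)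
  cwxx : ContinuousOn (fun p : ℝ × ℝ => wxx p.1 p.2) (Ico 0 T ×ˢ univ)
  dt : ∀ t ∈ Ico 0 T, ∀ x : ℝ, HasDerivAt (fun s => w s x) (wt t x) t
  dx : ∀ t ∈ Ico 0 T, ∀ x : ℝ, HasDerivAt (fun y => w t y) (wx t x) x
  dxx : ∀ t ∈ Ico 0 T, ∀ x : ℝ, HasDerivAt (fun y => wx t y) (wxx t x) x

lemma DDReg.sub {T : ℝ} {w wt wx wxx v vt vx vxx : ℝ → ℝ → ℝ}
    (hw : DDReg T w wt wx wxx) (hv : DDReg T v vt vx vxx) :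
    DDReg T (fun t x => w t x - v t x) (fun t x => wt t x - vt t x)
      (fun t x => wx t x - vx t x) (fun t x => wxx t x - vxx t x) where
  cw := hw.cw.sub hv.cw
  cwt := hw.cwt.sub hv.cwt
  cwx := hw.cwx.sub hv.cwx
  cwxx := hw.cwxx.sub hv.cwxx
  dt := fun t ht x => (hw.dt t ht x).sub (hv.dt t ht x)
  dx := fun t ht x => (hw.dx t ht x).sub (hv.dx t ht x)
  dxx := fun t ht x => (hw.dxx t ht x).sub (hv.dxx t ht x)

lemma DDReg.neg {T : ℝ} {w wt wx wxx : ℝ → ℝ → ℝ}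
    (hw : DDReg T w wt wx wxx) :
    DDReg T (fun t x => - w t x) (fun t x => - wt t x)
      (fun t x => - wx t x) (fun t x => - wxx t x) where
  cw := hw.cw.neg
  cwt := hw.cwt.neg
  cwx := hw.cwx.neg
  cwxx := hw.cwxx.neg
  dt := fun t ht x => (hw.dt t ht x).neg
  dx := fun t ht x => (hw.dx t ht x).neg
  dxx := fun t ht x => (hw.dxx t ht x).neg

/-- Reflected solutions. -/
lemma DDReg.reflect {T : ℝ} {w wt wx wxx : ℝ → ℝ → ℝ}
    (hw : DDReg T w wt wx wxx) :
    DDReg T (fun t x => w t (-x)) (fun t x => wt t (-x))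
      (fun t x => - wx t (-x)) (fun t x => wxx t (-x)) where
  cw := hw.cw.comp (f := fun p : ℝ × ℝ => (p.1, -p.2)) (by fun_prop) (fun p hp => ⟨hp.1, trivial⟩)
  cwt := hw.cwt.comp (f := fun p : ℝ × ℝ => (p.1, -p.2)) (by fun_prop) (fun p hp => ⟨hp.1, trivial⟩)
  cwx := (hw.cwx.comp (f := fun p : ℝ × ℝ => (p.1, -p.2)) (by fun_prop)
    (fun p hp => ⟨hp.1, trivial⟩)).neg
  cwxx := hw.cwxx.comp (f := fun p : ℝ × ℝ => (p.1, -p.2)) (by fun_prop)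
    (fun p hp => ⟨hp.1, trivial⟩)
  dt := fun t ht x => hw.dt t ht (-x)
  dx := fun t ht x => by
    have := (hw.dx t ht (-x)).comp x (hasDerivAt_neg x)
    simpa [Function.comp_def] using this
  dxx := fun t ht x => by
    have := ((hw.dxx t ht (-x)).comp x (hasDerivAt_neg x)).neg
    simpa [Function.comp_def, Pi.neg_def] using this

/-- Differentiation under the integral sign. -/
lemma dd_param {T τ : ℝ} (hτ : τ ∈ Ioo 0 T) (g : ℝ → ℝ) (hg : Continuous g) {p q : ℝ → ℝ → ℝ}
    (cp : ContinuousOn (fun z : ℝ × ℝ => p z.1 z.2) (Ico 0 T ×ˢ univ))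
    (cq : ContinuousOn (fun z : ℝ × ℝ => q z.1 z.2) (Ico 0 T ×ˢ univ))
    (d : ∀ t ∈ Ico 0 T, ∀ x : ℝ, HasDerivAt (fun y => p t y) (q t x) x) (x : ℝ) :
    HasDerivAt (fun y => ∫ t in (0:ℝ)..τ, g t * p t y) (∫ t in (0:ℝ)..τ, g t * q t x) x := by
  have huI : Set.uIcc 0 τ = Icc 0 τ := Set.uIcc_of_le hτ.1.le
  have huo : Set.uIoc 0 τ = Ioc 0 τ := Set.uIoc_of_le hτ.1.le
  have hsub : ∀ t ∈ Icc 0 τ, t ∈ Ico 0 T := fun t ht => ⟨ht.1, ht.2.trans_lt hτ.2⟩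
  have sl : ∀ {p : ℝ → ℝ → ℝ}, ContinuousOn (fun z : ℝ × ℝ => p z.1 z.2) (Ico 0 T ×ˢ univ) →
      ∀ y, ContinuousOn (fun t => g t * p t y) (Icc 0 τ) := by
    intro p cp y
    apply hg.continuousOn.mul
    exact cp.comp (f := fun t : ℝ => (t, y)) (by fun_prop) (fun t ht => ⟨hsub t ht, trivial⟩)
  have me : ∀ {p : ℝ → ℝ → ℝ}, ContinuousOn (fun z : ℝ × ℝ => p z.1 z.2) (Ico 0 T ×ˢ univ) →
      ∀ y, MeasureTheory.AEStronglyMeasurable (fun t => g t * p t y)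
        (MeasureTheory.volume.restrict (Set.uIoc 0 τ)) := by
    intro p cp y
    rw [huo]
    exact ((sl cp y).mono Ioc_subset_Icc_self).aestronglyMeasurable measurableSet_Ioc
  have hcomp : IsCompact (Icc 0 τ ×ˢ Icc (x - 1) (x + 1)) := isCompact_Icc.prod isCompact_Icc
  have cgq : ContinuousOn (fun z : ℝ × ℝ => g z.1 * q z.1 z.2) (Icc 0 τ ×ˢ Icc (x - 1) (x + 1)) := by
    apply ContinuousOn.mul (by fun_prop)
    exact cq.mono (fun z hz => ⟨hsub _ hz.1, trivial⟩)
  obtain ⟨C, hC⟩ := hcomp.exists_bound_of_continuousOn cgq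
  refine (intervalIntegral.hasDerivAt_integral_of_dominated_loc_of_deriv_le
    (F := fun y t => g t * p t y) (F' := fun y t => g t * q t y) (bound := fun _ => C)
    (s := Icc (x - 1) (x + 1)) (Icc_mem_nhds (by linarith) (by linarith)) ?_ ?_ ?_ ?_ ?_ ?_).2
  · exact Filter.Eventually.of_forall fun y => me cp y
  · apply ContinuousOn.intervalIntegrable
    rw [huI]
    exact sl cp x
  · exact me cq x
  · refine Filter.Eventually.of_forall fun t ht y hy => ?_
    rw [huo] at ht
    exact hC (t, y) ⟨⟨ht.1.le, ht.2⟩, hy⟩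
  · exact intervalIntegrable_const
  · refine Filter.Eventually.of_forall fun t ht y hy => ?_
    rw [huo] at ht
    exact (d t (hsub t ⟨ht.1.le, ht.2⟩) y).const_mul (g t)

/-- Unique continuation from lateral Cauchy data, with zero initial datum. -/
lemma dd_uc {T ε : ℝ} (hεT : ε ≤ T) {w wt wx wxx : ℝ → ℝ → ℝ} (hw : DDReg T w wt wx wxx)
    {a b : ℝ → ℝ} (ha : Continuous a) (hb : Continuous b) (hpos : ∀ x, 0 < a x)
    (hw0 : ∀ x, w 0 x = 0) {x₁ x₀ : ℝ}
    (hpde : ∀ t ∈ Ico 0 T, ∀ x ∈ Icc x₁ x₀, wt t x = a x * wxx t x + b x * wx t x)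
    (h1 : ∀ t ∈ Ico 0 ε, w t x₁ = 0) (h2 : ∀ t ∈ Ico 0 ε, wx t x₁ = 0) :
    ∀ t ∈ Ico 0 ε, ∀ x ∈ Icc x₁ x₀, w t x = 0 := by
  intro t ht x hx
  rcases ht.1.eq_or_lt with rfl | ht0
  · exact hw0 x
  obtain ⟨τ, htτ, hτε⟩ := exists_between ht.2
  have hτ0 : 0 < τ := ht0.trans htτ
  have hτT : τ < T := hτε.trans_le hεT
  have hτ : τ ∈ Ioo 0 T := ⟨hτ0, hτT⟩
  have huI : Set.uIcc 0 τ = Icc 0 τ := Set.uIcc_of_le hτ0.le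
  have hsub : ∀ t ∈ Icc 0 τ, t ∈ Ico 0 T := fun t ht => ⟨ht.1, ht.2.trans_lt hτT⟩
  have hsube : ∀ t ∈ Icc 0 τ, t ∈ Ico 0 ε := fun t ht => ⟨ht.1, ht.2.trans_lt hτε⟩
  have slw : ∀ {p : ℝ → ℝ → ℝ}, ContinuousOn (fun z : ℝ × ℝ => p z.1 z.2) (Ico 0 T ×ˢ univ) →
      ∀ y, ContinuousOn (fun t => p t y) (Icc 0 τ) := by
    intro p cp y
    exact cp.comp (f := fun t : ℝ => (t, y)) (by fun_prop) (fun t ht => ⟨hsub t ht, trivial⟩)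
  -- bounds
  obtain ⟨K, hK⟩ := isCompact_Icc.exists_bound_of_continuousOn (s := Icc x₁ x₀)
    (f := fun y => (1 + |b y|) / a y)
    (((continuous_const.add hb.abs).div ha (fun y => (hpos y).ne')).continuousOn)
  have cwτ : Continuous (fun y => w τ y) := by
    rw [continuous_iff_continuousAt]
    exact fun y => (hw.dx τ ⟨hτ0.le, hτT⟩ y).continuousAt
  obtain ⟨M, hM⟩ := isCompact_Icc.exists_bound_of_continuousOn (s := Icc x₁ x₀)
    (f := fun y => w τ y / a y)
    ((cwτ.div ha (fun y => (hpos y).ne')).continuousOn)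
  have hK0 : 0 ≤ K := (norm_nonneg _).trans (hK x hx)
  have hM0 : 0 ≤ M := (norm_nonneg _).trans (hM x hx)
  refine dd_lerch (h := fun t => w t x) (slw hw.cw x) (M := M) (K := (1 + K) * (x - x₁)) hM0 ?_
    t ⟨ht0, htτ⟩
  intro l hl
  set μ := √l with hμ
  have hl0 : 0 ≤ l := by linarith
  have hμ2 : μ * μ = l := Real.mul_self_sqrt hl0
  have hμ1 : 1 ≤ μ := by rw [hμ]; exact Real.one_le_sqrt.2 hl
  set g : ℝ → ℝ := fun t => Real.exp (l * (τ - t)) with hg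
  have cg : Continuous g := by fun_prop
  set H : ℝ → ℝ := fun y => ∫ t in (0:ℝ)..τ, g t * w t y with hH
  set H1 : ℝ → ℝ := fun y => ∫ t in (0:ℝ)..τ, g t * wx t y with hH1
  set H2 : ℝ → ℝ := fun y => ∫ t in (0:ℝ)..τ, g t * wxx t y with hH2
  have dH : ∀ y, HasDerivAt H (H1 y) y := dd_param hτ g cg hw.cw hw.cwx hw.dx
  have dH1 : ∀ y, HasDerivAt H1 (H2 y) y := dd_param hτ g cg hw.cwx hw.cwxx hw.dxx
  have eq : ∀ y ∈ Icc x₁ x₀, a y * H2 y + b y * H1 y = w τ y + l * H y := by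
    intro y hy
    have ii : ∀ {p : ℝ → ℝ → ℝ}, ContinuousOn (fun z : ℝ × ℝ => p z.1 z.2) (Ico 0 T ×ˢ univ) →
        IntervalIntegrable (fun t => g t * p t y) MeasureTheory.volume 0 τ := by
      intro p cp
      apply ContinuousOn.intervalIntegrable
      rw [huI]
      exact cg.continuousOn.mul (slw cp y)
    have e1 : a y * H2 y + b y * H1 y = ∫ t in (0:ℝ)..τ, g t * wt t y := by
      rw [hH2, hH1]
      simp only
      rw [← intervalIntegral.integral_const_mul, ← intervalIntegral.integral_const_mul,
        ← intervalIntegral.integral_add ((ii hw.cwxx).const_mul _) ((ii hw.cwx).const_mul _)]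
      apply intervalIntegral.integral_congr
      intro t ht
      rw [huI] at ht
      simp only
      rw [hpde t (hsub t ht) y hy]
      ring
    have dg : ∀ t, HasDerivAt g (-l * g t) t := by
      intro t
      have := (((hasDerivAt_id t).const_sub τ).const_mul l).exp
      refine this.congr_deriv ?_
      change Real.exp (l * (τ - t)) * (l * -1) = -l * Real.exp (l * (τ - t))
      ring
    have e2 := intervalIntegral.integral_mul_deriv_eq_deriv_mul (a := 0) (b := τ) (u := g)
      (v := fun t => w t y) (u' := fun t => -l * g t) (v' := fun t => wt t y)
      (fun t _ => dg t) (fun t ht => hw.dt t (hsub t (by rwa [huI] at ht)) y)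
      (Continuous.intervalIntegrable (by fun_prop) _ _)
      (ContinuousOn.intervalIntegrable (by rw [huI]; exact slw hw.cwt y))
    rw [e1, e2]
    have e3 : (∫ t in (0:ℝ)..τ, -l * g t * w t y) = -l * H y := by
      rw [hH]
      simp only
      rw [← intervalIntegral.integral_const_mul]
      congr 1
      ext t
      ring
    rw [e3]
    simp [hg, hw0]
  have z0 : H x₁ = 0 := by
    apply intervalIntegral.integral_zero_ae
    refine Filter.Eventually.of_forall fun t ht => ?_
    rw [Set.uIoc_of_le hτ0.le] at ht
    rw [h1 t (hsube t ⟨ht.1.le, ht.2⟩), mul_zero]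
  have z1 : H1 x₁ = 0 := by
    apply intervalIntegral.integral_zero_ae
    refine Filter.Eventually.of_forall fun t ht => ?_
    rw [Set.uIoc_of_le hτ0.le] at ht
    rw [h2 t (hsube t ⟨ht.1.le, ht.2⟩), mul_zero]
  have dz : ∀ y, HasDerivAt (fun y => (μ * H y, H1 y)) (μ * H1 y, H2 y) y := fun y =>
    ((dH y).const_mul μ).prodMk (dH1 y)
  have gr := norm_le_gronwallBound_of_norm_deriv_right_le (f := fun y => (μ * H y, H1 y))
    (f' := fun y => (μ * H1 y, H2 y)) (δ := 0) (K := (1 + K) * μ) (ε := M) (a := x₁) (b := x₀)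
    (fun y _ => (dz y).continuousAt.continuousWithinAt)
    (fun y _ => (dz y).hasDerivWithinAt) (by simp [z0, z1]) ?_ x hx
  · have hKμ : 1 ≤ (1 + K) * μ := by nlinarith
    rw [gronwallBound_of_K_ne_0 (by linarith)] at gr
    simp only [zero_mul, zero_add] at gr
    have g1 : |H x| ≤ ‖(μ * H x, H1 x)‖ := by
      refine le_trans ?_ (le_max_left _ _)
      simp only [Real.norm_eq_abs]
      rw [abs_mul, abs_of_nonneg (by linarith : 0 ≤ μ)]
      exact le_mul_of_one_le_left (abs_nonneg _) hμ1
    refine g1.trans (gr.trans ?_)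
    have g2 : M / ((1 + K) * μ) ≤ M := div_le_self hM0 hKμ
    have g3 : Real.exp ((1 + K) * μ * (x - x₁)) - 1 ≤ Real.exp ((1 + K) * (x - x₁) * μ) := by
      rw [show (1 + K) * μ * (x - x₁) = (1 + K) * (x - x₁) * μ by ring]; linarith
    calc _ ≤ M / ((1 + K) * μ) * Real.exp ((1 + K) * (x - x₁) * μ) := by
          apply mul_le_mul_of_nonneg_left g3
          positivity
      _ ≤ _ := by gcongr
  · intro y hy
    have hy' : y ∈ Icc x₁ x₀ := ⟨hy.1, hy.2.le⟩
    set N := ‖(μ * H y, H1 y)‖ with hN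
    have n1 : μ * |H y| ≤ N := by
      refine le_trans (le_of_eq ?_) (le_max_left _ _)
      simp only [Real.norm_eq_abs]
      rw [abs_mul, abs_of_nonneg (by linarith : 0 ≤ μ)]
    have n2 : |H1 y| ≤ N := le_max_right _ _
    have hN0 : 0 ≤ N := norm_nonneg _
    have hay := hpos y
    have k1 : (1 + |b y|) / a y ≤ K := (le_abs_self _).trans (hK y hy')
    have k2 : |w τ y| / a y ≤ M := by
      have := hM y hy'
      rwa [Real.norm_eq_abs, abs_div, abs_of_pos hay] at this
    have s2 : |H2 y| ≤ (1 + K) * μ * N + M := by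
      have e : H2 y = (l * H y - b y * H1 y) / a y + w τ y / a y := by
        field_simp
        linarith [eq y hy']
      have t1 : |l * H y - b y * H1 y| ≤ (1 + |b y|) * (μ * N) := by
        refine (abs_sub _ _).trans ?_
        rw [abs_mul, abs_mul, abs_of_nonneg hl0, ← hμ2]
        have : |b y| * |H1 y| ≤ |b y| * (μ * N) := by
          apply mul_le_mul_of_nonneg_left _ (abs_nonneg _)
          nlinarith
        nlinarith
      rw [e]
      refine (abs_add_le _ _).trans ?_
      rw [abs_div, abs_div, abs_of_pos hay]
      have t2 : |l * H y - b y * H1 y| / a y ≤ K * (μ * N) := by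
        calc _ ≤ (1 + |b y|) * (μ * N) / a y := by gcongr
          _ = (1 + |b y|) / a y * (μ * N) := by ring
          _ ≤ _ := by gcongr
      have : 0 ≤ μ * N := by positivity
      nlinarith
    apply max_le
    · simp only [Real.norm_eq_abs]
      rw [abs_mul, abs_of_nonneg (by linarith : 0 ≤ μ)]
      have : μ * |H1 y| ≤ μ * N := by gcongr
      have : 0 ≤ K * (μ * N) := by positivity
      nlinarith
    · exact s2

lemma dd_second_deriv {f p : ℝ → ℝ} {q x : ℝ} (hp : ∀ᶠ y in nhds x, HasDerivAt f (p y) y)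
    (hq : HasDerivAt p q x) (hmin : IsLocalMin f x) : 0 ≤ q := by
  by_contra hneg
  push Not at hneg
  have hd : deriv f =ᶠ[nhds x] p := hp.mono fun y hy => hy.deriv
  have h2 : deriv (deriv f) x = q := by rw [hd.deriv_eq, hq.deriv]
  have hmax := isLocalMax_of_deriv_deriv_neg (f := f) (x₀ := x) (by rw [h2]; exact hneg)
    hmin.deriv_eq_zero hp.self_of_nhds.continuousAt
  have hc : f =ᶠ[nhds x] fun _ => f x := by
    filter_upwards [hmin, hmax] with y h1 h2 using le_antisymm h2 h1
  have : deriv (deriv f) x = 0 := by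
    have h3 : deriv f =ᶠ[nhds x] fun _ => 0 := by
      have := hc.deriv
      simpa using this
    rw [h3.deriv_eq]; simp
  linarith

/-- Weak minimum principle. -/
lemma dd_minprinciple {τ x₀ x₂ : ℝ} {v vt vx vxx : ℝ → ℝ → ℝ} {a b : ℝ → ℝ} (hτ : 0 ≤ τ)
    (hx : x₀ ≤ x₂)
    (hc : ContinuousOn (fun z : ℝ × ℝ => v z.1 z.2) (Icc 0 τ ×ˢ Icc x₀ x₂))
    (dt : ∀ t ∈ Icc 0 τ, ∀ x : ℝ, HasDerivAt (fun s => v s x) (vt t x) t)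
    (dx : ∀ t ∈ Icc 0 τ, ∀ x : ℝ, HasDerivAt (fun y => v t y) (vx t x) x)
    (dxx : ∀ t ∈ Icc 0 τ, ∀ x : ℝ, HasDerivAt (fun y => vx t y) (vxx t x) x)
    (ha : ∀ x, 0 < a x)
    (hpde : ∀ t ∈ Icc 0 τ, ∀ x ∈ Ioo x₀ x₂, a x * vxx t x + b x * vx t x < vt t x)
    (h0 : ∀ x ∈ Icc x₀ x₂, 0 ≤ v 0 x) (hl : ∀ t ∈ Icc 0 τ, 0 ≤ v t x₀)
    (hr : ∀ t ∈ Icc 0 τ, 0 ≤ v t x₂) :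
    ∀ t ∈ Icc 0 τ, ∀ x ∈ Icc x₀ x₂, 0 ≤ v t x := by
  obtain ⟨⟨t, x⟩, ⟨ht, hxm⟩, hmin⟩ := (isCompact_Icc.prod isCompact_Icc).exists_isMinOn
    ⟨((0:ℝ), x₀), ⟨⟨le_rfl, hτ⟩, ⟨le_rfl, hx⟩⟩⟩ hc
  simp only at ht hxm
  suffices h : 0 ≤ v t x by
    intro s hs y hy
    exact h.trans (hmin (show (s, y) ∈ Icc 0 τ ×ˢ Icc x₀ x₂ from ⟨hs, hy⟩))
  by_contra hneg
  have t0 : 0 < t := by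
    rcases ht.1.eq_or_lt with h | h
    · subst h; exact absurd (h0 x hxm) hneg
    · exact h
  have hxl : x₀ < x := by
    rcases hxm.1.eq_or_lt with h | h
    · subst h; exact absurd (hl t ht) hneg
    · exact h
  have hxr : x < x₂ := by
    rcases hxm.2.eq_or_lt with h | h
    · subst h; exact absurd (hr t ht) hneg
    · exact h
  have m1 : IsLocalMin (fun y => v t y) x := by
    filter_upwards [Ioo_mem_nhds hxl hxr] with y hy
    exact hmin (show (t, y) ∈ Icc 0 τ ×ˢ Icc x₀ x₂ from ⟨ht, hy.1.le, hy.2.le⟩)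
  have e1 : vx t x = 0 := m1.hasDerivAt_eq_zero (dx t ht x)
  have e2 : 0 ≤ vxx t x := dd_second_deriv (Filter.Eventually.of_forall (dx t ht)) (dxx t ht x) m1
  have e3 : vt t x ≤ 0 := by
    have hd := (dt t ht x).hasDerivWithinAt (s := Iio t)
    rw [hasDerivWithinAt_iff_tendsto_slope' (by simp)] at hd
    apply le_of_tendsto hd
    filter_upwards [Ioo_mem_nhdsLT t0] with s hs
    have : v t x ≤ v s x :=
      hmin (show (s, x) ∈ Icc 0 τ ×ˢ Icc x₀ x₂ from ⟨⟨hs.1.le, hs.2.le.trans ht.2⟩, hxm⟩)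
    rw [slope_def_field]
    apply div_nonpos_of_nonneg_of_nonpos <;> linarith [hs.2]
  have := hpde t ht x ⟨hxl, hxr⟩
  rw [e1] at this
  have := mul_nonneg (ha x).le e2
  linarith

/-- Hopf-type lemma. -/
lemma dd_hopf {T ε : ℝ} (hεT : ε ≤ T) {w wt wx wxx : ℝ → ℝ → ℝ} (hw : DDReg T w wt wx wxx)
    {a b : ℝ → ℝ} (ha : Continuous a) (hb : Continuous b) (hpos : ∀ x, 0 < a x)
    (hw0 : ∀ x, w 0 x = 0) {x₀ δ τ : ℝ} (hδ : 0 < δ) (hτ : τ ∈ Ioo 0 ε)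
    (hpde : ∀ t ∈ Icc 0 τ, ∀ x ∈ Ioc x₀ (x₀ + δ), a x * wxx t x + b x * wx t x < wt t x)
    (h1 : ∀ t ∈ Ico 0 ε, w t x₀ = 0) :
    ∃ t ∈ Ico 0 ε, wx t x₀ ≠ 0 := by
  set x₂ := x₀ + δ with hx₂
  have hx02 : x₀ < x₂ := by linarith
  have h0T : (0:ℝ) ∈ Ico 0 T := ⟨le_rfl, by linarith [hτ.1, hτ.2]⟩
  have wx0 : ∀ x, wx 0 x = 0 := by
    intro x
    have := hw.dx 0 h0T x
    have h2 : (fun y => w 0 y) = fun _ => 0 := funext hw0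
    rw [h2] at this
    exact this.unique (hasDerivAt_const x 0)
  have wxx0 : ∀ x, wxx 0 x = 0 := by
    intro x
    have := hw.dxx 0 h0T x
    have h2 : (fun y => wx 0 y) = fun _ => 0 := funext wx0
    rw [h2] at this
    exact this.unique (hasDerivAt_const x 0)
  have wtpos : 0 < wt 0 x₂ := by
    have := hpde 0 ⟨le_rfl, hτ.1.le⟩ x₂ ⟨hx02, le_rfl⟩
    simpa [wx0, wxx0] using this
  -- positivity on the right boundary for small times
  obtain ⟨τ₁, hτ₁0, hτ₁τ, hτ₁⟩ : ∃ τ₁, 0 < τ₁ ∧ τ₁ ≤ τ ∧ ∀ t ∈ Ioc 0 τ₁, 0 < w t x₂ := by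
    have hd := (hw.dt 0 h0T x₂).hasDerivWithinAt (s := Ioi 0)
    rw [hasDerivWithinAt_iff_tendsto_slope' (by simp)] at hd
    have h2 := hd.eventually (lt_mem_nhds wtpos)
    rw [eventually_nhdsWithin_iff, Metric.eventually_nhds_iff] at h2
    obtain ⟨r, hr, h3⟩ := h2
    refine ⟨min τ (r / 2), lt_min hτ.1 (by linarith), min_le_left _ _, fun t ht => ?_⟩
    have ht2 : t ≤ r / 2 := ht.2.trans (min_le_right _ _)
    have h4 := h3 (y := t) (by rw [Real.dist_eq, sub_zero, abs_of_pos ht.1]; linarith) ht.1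
    rw [slope_def_field] at h4
    simp only [hw0, sub_zero] at h4
    exact (div_pos_iff_of_pos_right ht.1).1 h4
  have hsub : ∀ t ∈ Icc 0 τ₁, t ∈ Ico 0 T := fun t ht =>
    ⟨ht.1, by linarith [ht.2, hτ.2]⟩
  have hsubτ : ∀ t ∈ Icc 0 τ₁, t ∈ Icc 0 τ := fun t ht => ⟨ht.1, ht.2.trans hτ₁τ⟩
  have hsubε : ∀ t ∈ Icc 0 τ₁, t ∈ Ico 0 ε := fun t ht => ⟨ht.1, by linarith [ht.2, hτ.2]⟩
  have cr : ContinuousOn (fun t => w t x₂) (Icc 0 τ₁) := fun t ht =>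
    (hw.dt t (hsub t ht) x₂).continuousAt.continuousWithinAt
  have wr0 : ∀ t ∈ Icc 0 τ₁, 0 ≤ w t x₂ := by
    intro t ht
    rcases ht.1.eq_or_lt with h | h
    · rw [← h, hw0]
    · exact (hτ₁ t ⟨h, ht.2⟩).le
  obtain ⟨tm, htm, hmin⟩ := isCompact_Icc.exists_isMinOn (s := Icc (τ₁ / 2) τ₁)
    ⟨τ₁, by linarith, le_rfl⟩ (cr.mono (Icc_subset_Icc (by linarith) le_rfl))
  set m := w tm x₂ with hm
  have hm0 : 0 < m := hτ₁ tm ⟨by linarith [htm.1], htm.2⟩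
  set C := 2 * δ / τ₁ with hC
  have hC0 : 0 < C := by positivity
  obtain ⟨k₀, hk₀⟩ := isCompact_Icc.exists_bound_of_continuousOn (s := Icc x₀ x₂)
    (f := fun y => (C + |b y|) / a y)
    (((continuous_const.add hb.abs).div ha (fun y => (hpos y).ne')).continuousOn)
  set k := max k₀ 1 with hk
  have hk1 : 0 < k := lt_of_lt_of_le one_pos (le_max_right _ _)
  have hkk : ∀ y ∈ Icc x₀ x₂, C + |b y| ≤ k * a y := by
    intro y hy
    have h2 := ((le_abs_self _).trans (hk₀ y hy)).trans (le_max_left k₀ 1)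
    rwa [div_le_iff₀ (hpos y)] at h2
  set η := m / Real.exp (k * δ) with hη
  have hη0 : 0 < η := by positivity
  set E : ℝ → ℝ → ℝ := fun t x => Real.exp (k * (x - x₀ - C * (τ₁ - t))) with hE
  have cE : Continuous (fun z : ℝ × ℝ => E z.1 z.2) := by
    simp only [hE]; fun_prop
  have dEt : ∀ t x, HasDerivAt (fun s => E s x) (k * C * E t x) t := by
    intro t x
    have := (((((hasDerivAt_id t).const_sub τ₁).const_mul C).const_sub (x - x₀)).const_mul k).exp
    refine this.congr_deriv ?_
    simp only [hE, id]; ring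
  have dEx : ∀ t x, HasDerivAt (fun y => E t y) (k * E t x) x := by
    intro t x
    have := ((((hasDerivAt_id x).sub_const x₀).sub_const (C * (τ₁ - t))).const_mul k).exp
    refine this.congr_deriv ?_
    simp only [hE, id]; ring
  have Epos : ∀ t x, 0 < E t x := fun t x => Real.exp_pos _
  have E1 : ∀ t x, x - x₀ ≤ C * (τ₁ - t) → E t x ≤ 1 := by
    intro t x h
    simp only [hE]
    apply Real.exp_le_one_iff.2
    apply mul_nonpos_of_nonneg_of_nonpos hk1.le
    linarith
  have key := dd_minprinciple (v := fun t x => w t x - η * (E t x - 1))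
    (vt := fun t x => wt t x - η * (k * C * E t x)) (vx := fun t x => wx t x - η * (k * E t x))
    (vxx := fun t x => wxx t x - η * (k * (k * E t x))) (a := a) (b := b) (x₀ := x₀) (x₂ := x₂)
    hτ₁0.le hx02.le
    ((hw.cw.mono fun z hz => ⟨hsub _ hz.1, trivial⟩).sub
      (Continuous.continuousOn (by fun_prop)))
    (fun t ht x => (hw.dt t (hsub t ht) x).sub (((dEt t x).sub_const 1).const_mul η))
    (fun t ht x => (hw.dx t (hsub t ht) x).sub (((dEx t x).sub_const 1).const_mul η))
    (fun t ht x => (hw.dxx t (hsub t ht) x).sub (((dEx t x).const_mul k).const_mul η))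
    hpos ?_ ?_ ?_ ?_
  · refine ⟨τ₁, hsubε τ₁ ⟨hτ₁0.le, le_rfl⟩, ?_⟩
    have hτm : τ₁ ∈ Icc 0 τ₁ := ⟨hτ₁0.le, le_rfl⟩
    have hd := ((hw.dx τ₁ (hsub τ₁ hτm) x₀).sub
      (((dEx τ₁ x₀).sub_const 1).const_mul η)).hasDerivWithinAt (s := Ioi x₀)
    rw [hasDerivWithinAt_iff_tendsto_slope' (by simp)] at hd
    have hEx : E τ₁ x₀ = 1 := by simp [hE]
    have : 0 ≤ wx τ₁ x₀ - η * (k * E τ₁ x₀) := by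
      apply ge_of_tendsto hd
      filter_upwards [Ioo_mem_nhdsGT hx02] with y hy
      rw [slope_def_field]
      have k1 := key τ₁ hτm y ⟨hy.1.le, hy.2.le⟩
      have k2 : w τ₁ x₀ - η * (E τ₁ x₀ - 1) = 0 := by
        rw [hEx, h1 τ₁ (hsubε τ₁ hτm)]; ring
      apply div_nonneg _ (by linarith [hy.1])
      simp only [Pi.sub_apply]
      rw [k2]
      linarith
    rw [hEx] at this
    have : 0 < η * (k * 1) := by positivity
    intro h
    linarith
  · intro t ht x hx
    have p1 := hpde t (hsubτ t ht) x ⟨hx.1, hx.2.le⟩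
    have p2 := hkk x ⟨hx.1.le, hx.2.le⟩
    have p3 : 0 ≤ k * a x - C + b x := by linarith [neg_abs_le (b x)]
    have p4 : 0 ≤ η * k * E t x * (k * a x - C + b x) := by
      have := Epos t x
      positivity
    nlinarith
  · intro x hx
    simp only [hw0]
    have : E 0 x ≤ 1 := by
      apply E1
      have : C * (τ₁ - 0) = 2 * δ := by rw [hC]; field_simp; ring
      rw [this]
      linarith [hx.2]
    nlinarith
  · intro t ht
    rw [h1 t (hsubε t ht)]
    have : E t x₀ ≤ 1 := by
      apply E1
      have := ht.2
      have : 0 ≤ C * (τ₁ - t) := mul_nonneg hC0.le (by linarith)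
      linarith
    nlinarith
  · intro t ht
    have hwr := wr0 t ht
    rcases le_total t (τ₁ / 2) with h | h
    · have : E t x₂ ≤ 1 := by
        apply E1
        have : C * (τ₁ / 2) = δ := by rw [hC]; field_simp
        have : C * (τ₁ / 2) ≤ C * (τ₁ - t) := by
          apply mul_le_mul_of_nonneg_left _ hC0.le
          linarith
        linarith
      nlinarith
    · have q1 : m ≤ w t x₂ := hmin (show t ∈ Icc (τ₁ / 2) τ₁ from ⟨h, ht.2⟩)
      have q2 : E t x₂ ≤ Real.exp (k * δ) := by
        apply Real.exp_le_exp.2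
        apply mul_le_mul_of_nonneg_left _ hk1.le
        have : 0 ≤ C * (τ₁ - t) := mul_nonneg hC0.le (by linarith [ht.2])
        linarith
      have q3 : η * Real.exp (k * δ) = m := by rw [hη]; field_simp
      nlinarith

/-- Extracting the common leading power of two analytic functions. -/
lemma dd_common {A B : ℝ → ℝ} {x₀ : ℝ} (hA : AnalyticAt ℝ A x₀) (hB : AnalyticAt ℝ B x₀) :
    (∀ᶠ x in nhds x₀, A x = 0 ∧ B x = 0) ∨
    ∃ (n : ℕ) (A' B' : ℝ → ℝ), ContinuousAt A' x₀ ∧ ContinuousAt B' x₀ ∧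
      (A' x₀ ≠ 0 ∨ B' x₀ ≠ 0) ∧
      ∀ᶠ x in nhds x₀, A x = (x - x₀) ^ n * A' x ∧ B x = (x - x₀) ^ n * B' x := by
  by_cases zA : ∀ᶠ x in nhds x₀, A x = 0
  · by_cases zB : ∀ᶠ x in nhds x₀, B x = 0
    · exact Or.inl (zA.and zB)
    · right
      obtain ⟨n, g, hg, hg0, he⟩ := hB.exists_eventuallyEq_pow_smul_nonzero_iff.2 zB
      refine ⟨n, fun _ => 0, g, continuousAt_const, hg.continuousAt, Or.inr hg0, ?_⟩
      filter_upwards [zA, he] with x h1 h2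
      exact ⟨by simp [h1], by simpa using h2⟩
  · right
    obtain ⟨n, g, hg, hg0, he⟩ := hA.exists_eventuallyEq_pow_smul_nonzero_iff.2 zA
    by_cases zB : ∀ᶠ x in nhds x₀, B x = 0
    · refine ⟨n, g, fun _ => 0, hg.continuousAt, continuousAt_const, Or.inl hg0, ?_⟩
      filter_upwards [zB, he] with x h1 h2
      exact ⟨by simpa using h2, by simp [h1]⟩
    · obtain ⟨m, h, hh, hh0, he2⟩ := hB.exists_eventuallyEq_pow_smul_nonzero_iff.2 zB
      have cg := hg.continuousAt
      have ch := hh.continuousAt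
      have cp : ∀ j : ℕ, ContinuousAt (fun x : ℝ => (x - x₀) ^ j) x₀ := fun j => by fun_prop
      rcases le_total n m with hnm | hnm
      · refine ⟨n, g, fun x => (x - x₀) ^ (m - n) * h x, cg, (cp _).mul ch, Or.inl hg0, ?_⟩
        filter_upwards [he, he2] with x h1 h2
        refine ⟨by simpa using h1, ?_⟩
        rw [h2, smul_eq_mul, ← mul_assoc, ← pow_add, Nat.add_sub_cancel' hnm]
      · refine ⟨m, fun x => (x - x₀) ^ (n - m) * g x, h, (cp _).mul cg, ch, Or.inr hh0, ?_⟩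
        filter_upwards [he, he2] with x h1 h2
        refine ⟨?_, by simpa using h2⟩
        rw [h1, smul_eq_mul, ← mul_assoc, ← pow_add, Nat.add_sub_cancel' hnm]

/-- Solution of `∂ₜ u = a ∂ₓₓ u + b ∂ₓ u`, `u(0,·) = f`, with explicit derivatives. -/
def DDSol (T : ℝ) (a b f : ℝ → ℝ) (u : ℝ → ℝ → ℝ) : Prop :=
  ∃ ut ux uxx : ℝ → ℝ → ℝ, DDReg T u ut ux uxx ∧
    (∀ t ∈ Ico 0 T, ∀ x : ℝ, ut t x = a x * uxx t x + b x * ux t x) ∧ ∀ x, u 0 x = f x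

lemma DDSol.neg {T : ℝ} {a b f : ℝ → ℝ} {u : ℝ → ℝ → ℝ} (h : DDSol T a b f u) :
    DDSol T a b (fun x => - f x) (fun t x => - u t x) := by
  obtain ⟨ut, ux, uxx, h1, h2, h3⟩ := h
  refine ⟨_, _, _, h1.neg, fun t ht x => ?_, fun x => by simp only [h3]⟩
  try simp only
  rw [h2 t ht x]; ring

lemma DDSol.reflect {T : ℝ} {a b f : ℝ → ℝ} {u : ℝ → ℝ → ℝ} (h : DDSol T a b f u) :
    DDSol T (fun x => a (-x)) (fun x => - b (-x)) (fun x => f (-x)) (fun t x => u t (-x)) := by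
  obtain ⟨ut, ux, uxx, h1, h2, h3⟩ := h
  refine ⟨_, _, _, h1.reflect, fun t ht x => ?_, fun x => by simp only [h3]⟩
  simp only
  rw [h2 t ht (-x)]; ring

lemma dd_of_classical {T : ℝ} {b s f : ℝ → ℝ} {u : ℝ → ℝ → ℝ}
    (h : IsClassicalSolution T b s f u) : DDSol T (fun x => (1 / 2) * (s x) ^ 2) b f u := by
  obtain ⟨h1, h2, h3, h4, h5, h6, h7, h8, h9⟩ := h
  exact ⟨fun t x => deriv (fun s => u s x) t, fun t x => deriv (fun y => u t y) x,
    fun t x => deriv (deriv (fun y => u t y)) x,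
    ⟨h1, h5, h6, h7, fun t ht x => (h2 t ht x).hasDerivAt, fun t ht x => (h3 t ht x).hasDerivAt,
      fun t ht x => (h4 t ht x).hasDerivAt⟩, h8, h9⟩

/-- Derivatives of the solution at time zero. -/
lemma dd_init {T : ℝ} (hT : 0 < T) {u ut ux uxx : ℝ → ℝ → ℝ} (h : DDReg T u ut ux uxx)
    {f f1 f2 : ℝ → ℝ} (hf : ∀ x, HasDerivAt f (f1 x) x) (hf1 : ∀ x, HasDerivAt f1 (f2 x) x)
    (h0 : ∀ x, u 0 x = f x) : (∀ x, ux 0 x = f1 x) ∧ (∀ x, uxx 0 x = f2 x) := by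
  have h0T : (0:ℝ) ∈ Ico 0 T := ⟨le_rfl, hT⟩
  have e1 : ∀ x, ux 0 x = f1 x := by
    intro x
    have := h.dx 0 h0T x
    have h2 : (fun y => u 0 y) = f := funext h0
    rw [h2] at this
    exact this.unique (hf x)
  refine ⟨e1, fun x => ?_⟩
  have := h.dxx 0 h0T x
  have h2 : (fun y => ux 0 y) = f1 := funext e1
  rw [h2] at this
  exact this.unique (hf1 x)

lemma dd_time0 {T ε : ℝ} (hε : 0 < ε) (hεT : ε ≤ T) {a at' b bt f f1 f2 : ℝ → ℝ} {u v : ℝ → ℝ → ℝ}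
    (hf : ∀ x, HasDerivAt f (f1 x) x) (hf1 : ∀ x, HasDerivAt f1 (f2 x) x)
    (hu : DDSol T a b f u) (hv : DDSol T at' bt f v) {x : ℝ}
    (hobs : ∀ t ∈ Ico 0 ε, u t x = v t x) :
    (a x - at' x) * f2 x + (b x - bt x) * f1 x = 0 := by
  obtain ⟨ut, ux, uxx, ru, pu, iu⟩ := hu
  obtain ⟨vt, vx, vxx, rv, pv, iv⟩ := hv
  have hT : 0 < T := hε.trans_le hεT
  have h0T : (0:ℝ) ∈ Ico 0 T := ⟨le_rfl, hT⟩
  obtain ⟨u1, u2⟩ := dd_init hT ru hf hf1 iu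
  obtain ⟨v1, v2⟩ := dd_init hT rv hf hf1 iv
  have d1 := ((ru.sub rv).dt 0 h0T x).hasDerivWithinAt (s := Ici 0)
  have d2 : HasDerivWithinAt (fun s => u s x - v s x) 0 (Ici 0) 0 := by
    apply (hasDerivWithinAt_const (0:ℝ) (Ici 0) (0:ℝ)).congr_of_eventuallyEq
    · filter_upwards [Ico_mem_nhdsGE hε] with t ht
      rw [hobs t ht, sub_self]
    · rw [hobs 0 ⟨le_rfl, hε⟩, sub_self]
  have e := (uniqueDiffWithinAt_Ici (0:ℝ)).eq_deriv _ d1 d2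
  try simp only at e
  rw [pu 0 h0T, pv 0 h0T, u1, u2, v1, v2] at e
  linarith

lemma dd_single {T ε : ℝ} (hε : 0 < ε) (hεT : ε ≤ T) {a at' b bt f f1 f2 : ℝ → ℝ} {u v : ℝ → ℝ → ℝ}
    (hf : ∀ x, HasDerivAt f (f1 x) x) (hf1 : ∀ x, HasDerivAt f1 (f2 x) x)
    (hu : DDSol T a b f u) (hv : DDSol T at' bt f v)
    (ca : Continuous a) (cb : Continuous b) (hpos : ∀ x, 0 < a x)
    {x₁ x₀ : ℝ} (hx : x₁ < x₀) (hE : ∀ x ∈ Icc x₁ x₀, a x = at' x ∧ b x = bt x)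
    (hobs : ∀ t ∈ Ico 0 ε, ∀ᶠ x in nhds x₁, u t x = v t x)
    {n : ℕ} {A' B' : ℝ → ℝ} (cA : ContinuousAt A' x₀) (cB : ContinuousAt B' x₀)
    (hAB : ∀ᶠ x in nhdsWithin x₀ (Ioi x₀),
      a x - at' x = (x - x₀) ^ n * A' x ∧ b x - bt x = (x - x₀) ^ n * B' x) :
    A' x₀ * f2 x₀ + B' x₀ * f1 x₀ = 0 := by
  obtain ⟨ut, ux, uxx, ru, pu, iu⟩ := hu
  obtain ⟨vt, vx, vxx, rv, pv, iv⟩ := hv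
  have hT : 0 < T := hε.trans_le hεT
  have h0T : (0:ℝ) ∈ Ico 0 T := ⟨le_rfl, hT⟩
  obtain ⟨v1, v2⟩ := dd_init hT rv hf hf1 iv
  have rw' := ru.sub rv
  have w0 : ∀ x, u 0 x - v 0 x = 0 := fun x => by rw [iu, iv, sub_self]
  have hsub : ∀ t ∈ Ico 0 ε, t ∈ Ico 0 T := fun t ht => ⟨ht.1, ht.2.trans_le hεT⟩
  have pw : ∀ t ∈ Ico 0 T, ∀ x, ut t x - vt t x = a x * (uxx t x - vxx t x) +
      b x * (ux t x - vx t x) + ((a x - at' x) * vxx t x + (b x - bt x) * vx t x) := by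
    intro t ht x
    rw [pu t ht, pv t ht]; ring
  have uc := dd_uc hεT rw' ca cb hpos w0 (x₁ := x₁) (x₀ := x₀)
    (fun t ht x hx => by
      have := pw t ht x
      rw [(hE x hx).1, (hE x hx).2] at this
      try simp only
      rw [(hE x hx).1, (hE x hx).2, this]; ring)
    (fun t ht => by rw [(hobs t ht).self_of_nhds, sub_self])
    (fun t ht => by
      have d1 := rw'.dx t (hsub t ht) x₁
      refine d1.unique ((hasDerivAt_const x₁ (0:ℝ)).congr_of_eventuallyEq ?_)
      filter_upwards [hobs t ht] with y hy
      rw [hy, sub_self])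
  have wx0 : ∀ t ∈ Ico 0 ε, ux t x₀ - vx t x₀ = 0 := by
    intro t ht
    have d1 := (rw'.dx t (hsub t ht) x₀).hasDerivWithinAt (s := Iic x₀)
    refine (uniqueDiffWithinAt_Iic x₀).eq_deriv _ d1
      ((hasDerivWithinAt_const x₀ (Iic x₀) (0:ℝ)).congr_of_eventuallyEq ?_ ?_)
    · filter_upwards [Ioc_mem_nhdsLE hx] with y hy
      exact uc t ht y ⟨hy.1.le, hy.2⟩
    · exact uc t ht x₀ ⟨hx.le, le_rfl⟩
  have wl : ∀ t ∈ Ico 0 ε, u t x₀ - v t x₀ = 0 := fun t ht => uc t ht x₀ ⟨hx.le, le_rfl⟩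
  -- sign region
  have region : ∀ c : ℝ, 0 < c * (A' x₀ * f2 x₀ + B' x₀ * f1 x₀) →
      ∃ δ τ : ℝ, 0 < δ ∧ τ ∈ Ioo 0 ε ∧ ∀ t ∈ Icc 0 τ, ∀ x ∈ Ioc x₀ (x₀ + δ),
        0 < c * ((a x - at' x) * vxx t x + (b x - bt x) * vx t x) := by
    intro c hc
    have hmem : ((0:ℝ), x₀) ∈ Ico 0 T ×ˢ (univ : Set ℝ) := ⟨h0T, trivial⟩
    have cA2 : ContinuousWithinAt (fun z : ℝ × ℝ => A' z.2) (Ico 0 T ×ˢ univ) (0, x₀) :=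
      (ContinuousAt.comp (f := fun z : ℝ × ℝ => z.2) (x := ((0:ℝ), x₀)) cA
        continuousAt_snd).continuousWithinAt
    have cB2 : ContinuousWithinAt (fun z : ℝ × ℝ => B' z.2) (Ico 0 T ×ˢ univ) (0, x₀) :=
      (ContinuousAt.comp (f := fun z : ℝ × ℝ => z.2) (x := ((0:ℝ), x₀)) cB
        continuousAt_snd).continuousWithinAt
    have cG := ((cA2.mul (rv.cwxx _ hmem)).add (cB2.mul (rv.cwx _ hmem))).const_mul c
    have hev := cG.eventually (lt_mem_nhds (a := 0) (by simpa [v1, v2] using hc))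
    rw [eventually_nhdsWithin_iff, Metric.eventually_nhds_iff] at hev hAB
    obtain ⟨r, hr, h1⟩ := hev
    obtain ⟨d, hd, h2⟩ := hAB
    refine ⟨min (r / 2) (d / 2), min (r / 2) (ε / 2), by positivity,
      ⟨by positivity, (min_le_right _ _).trans_lt (by linarith)⟩, ?_⟩
    intro t ht x hx
    have t1 : t ≤ r / 2 := ht.2.trans (min_le_left _ _)
    have t2 : t ≤ ε / 2 := ht.2.trans (min_le_right _ _)
    have x1 : x ≤ x₀ + r / 2 := hx.2.trans (by gcongr; exact min_le_left _ _)
    have x2 : x ≤ x₀ + d / 2 := hx.2.trans (by gcongr; exact min_le_right _ _)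
    have q1 := h1 (y := (t, x)) (by
      rw [Prod.dist_eq, Real.dist_eq, Real.dist_eq]
      apply max_lt
      · simp only [sub_zero]; rw [abs_of_nonneg ht.1]; linarith
      · simp only; rw [abs_of_nonneg (by linarith [hx.1])]; linarith)
      ⟨⟨ht.1, by simp only; linarith⟩, trivial⟩
    obtain ⟨q2, q3⟩ := h2 (y := x)
      (by rw [Real.dist_eq, abs_of_nonneg (by linarith [hx.1])]; linarith) hx.1
    have hp : 0 < (x - x₀) ^ n := pow_pos (by linarith [hx.1]) n
    rw [q2, q3]
    have := mul_pos hp q1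
    simp only [Pi.add_apply, Pi.mul_apply] at this
    linarith
  by_contra hne
  rcases lt_or_gt_of_ne hne with h | h
  · obtain ⟨δ, τ, hδ, hτ, hF⟩ := region (-1) (by linarith)
    obtain ⟨t, ht, hh⟩ := dd_hopf hεT rw'.neg ca cb hpos (fun x => by rw [w0, neg_zero])
      hδ hτ (fun t ht x hx => by
        have := hF t ht x hx
        have := pw t (hsub t ⟨ht.1, ht.2.trans_lt hτ.2⟩) x
        try simp only
        rw [this]; linarith) (fun t ht => by rw [wl t ht, neg_zero])
    exact hh (by rw [wx0 t ht, neg_zero])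
  · obtain ⟨δ, τ, hδ, hτ, hF⟩ := region 1 (by linarith)
    obtain ⟨t, ht, hh⟩ := dd_hopf hεT rw' ca cb hpos w0
      hδ hτ (fun t ht x hx => by
        have := hF t ht x hx
        have := pw t (hsub t ⟨ht.1, ht.2.trans_lt hτ.2⟩) x
        try simp only
        rw [this]; linarith) wl
    exact hh (wx0 t ht)

/-- Analytic from the right at every point. -/
def DDRA (ψ : ℝ → ℝ) : Prop :=
  ∀ x₀ : ℝ, ∃ g : ℝ → ℝ, AnalyticAt ℝ g x₀ ∧ ∀ᶠ x in nhdsWithin x₀ (Ioi x₀), ψ x = g x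

lemma dd_right {T ε : ℝ} (hε : 0 < ε) (hεT : ε ≤ T) {a at' b bt : ℝ → ℝ} {u₁ u₂ v₁ v₂ : ℝ → ℝ → ℝ}
    (hu₁ : DDSol T a b (fun x => x ^ 1) u₁) (hu₂ : DDSol T a b (fun x => x ^ 2) u₂)
    (hv₁ : DDSol T at' bt (fun x => x ^ 1) v₁) (hv₂ : DDSol T at' bt (fun x => x ^ 2) v₂)
    (ca : Continuous a) (cat : Continuous at') (cb : Continuous b) (cbt : Continuous bt)
    (hpos : ∀ x, 0 < a x)
    (ra : DDRA a) (rat : DDRA at') (rb : DDRA b) (rbt : DDRA bt)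
    {ω : Set ℝ} (hω : IsOpen ω) {x₁ : ℝ} (hx₁ : x₁ ∈ ω)
    (hobs₁ : ∀ t ∈ Ico 0 ε, ∀ x ∈ ω, u₁ t x = v₁ t x)
    (hobs₂ : ∀ t ∈ Ico 0 ε, ∀ x ∈ ω, u₂ t x = v₂ t x) :
    ∀ x, x₁ ≤ x → a x = at' x ∧ b x = bt x := by
  have f1 : ∀ x : ℝ, HasDerivAt (fun x : ℝ => x ^ 1) ((fun _ => 1) x) x := fun x => by
    simpa using hasDerivAt_id' x
  have f1' : ∀ x : ℝ, HasDerivAt (fun _ : ℝ => (1:ℝ)) ((fun _ => 0) x) x := fun x =>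
    hasDerivAt_const x 1
  have f2 : ∀ x : ℝ, HasDerivAt (fun x : ℝ => x ^ 2) ((fun x => 2 * x) x) x := fun x => by
    simpa using hasDerivAt_pow 2 x
  have f2' : ∀ x : ℝ, HasDerivAt (fun x : ℝ => 2 * x) ((fun _ => 2) x) x := fun x => by
    simpa using (hasDerivAt_id' x).const_mul (2:ℝ)
  have hEω : ∀ x ∈ ω, a x = at' x ∧ b x = bt x := by
    intro x hx
    have e1 := dd_time0 hε hεT f1 f1' hu₁ hv₁ (fun t ht => hobs₁ t ht x hx)
    have e2 := dd_time0 hε hεT f2 f2' hu₂ hv₂ (fun t ht => hobs₂ t ht x hx)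
    try simp only at e1 e2
    have hb : b x - bt x = 0 := by linarith
    rw [hb] at e2
    exact ⟨by linarith, by linarith⟩
  intro z hz
  by_contra hzE
  set S : Set ℝ := {x | x₁ ≤ x ∧ ¬ (a x = at' x ∧ b x = bt x)} with hS
  have hSne : S.Nonempty := ⟨z, hz, hzE⟩
  have hSb : BddBelow S := ⟨x₁, fun x hx => hx.1⟩
  set x₀ := sInf S with hx₀
  have hlt : ∀ x, x₁ ≤ x → x < x₀ → a x = at' x ∧ b x = bt x := by
    intro x h1 h2
    by_contra h3
    exact absurd (csInf_le hSb (show x ∈ S from ⟨h1, h3⟩)) (not_le.2 h2)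
  have hx10 : x₁ < x₀ := by
    obtain ⟨r, hr, hball⟩ := Metric.isOpen_iff.1 hω x₁ hx₁
    have : x₁ + r ≤ x₀ := by
      apply le_csInf hSne
      intro x hx
      by_contra h
      push Not at h
      apply hx.2
      apply hEω x (hball _)
      rw [Metric.mem_ball, Real.dist_eq, abs_of_nonneg (by linarith [hx.1])]
      linarith
    linarith
  have hEcl : IsClosed {x | a x = at' x ∧ b x = bt x} :=
    (isClosed_eq ca cat).inter (isClosed_eq cb cbt)
  have hE0 : a x₀ = at' x₀ ∧ b x₀ = bt x₀ := by
    have : x₀ ∈ closure (Ioo x₁ x₀) := by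
      rw [closure_Ioo hx10.ne]; exact ⟨hx10.le, le_rfl⟩
    exact hEcl.closure_subset_iff.2 (fun y hy => hlt y hy.1.le hy.2) this
  have hE : ∀ x ∈ Icc x₁ x₀, a x = at' x ∧ b x = bt x := by
    intro x hx
    rcases hx.2.eq_or_lt with h | h
    · rw [h]; exact hE0
    · exact hlt x hx.1 h
  have hev : ∀ᶠ x in nhdsWithin x₀ (Ioi x₀), a x = at' x ∧ b x = bt x := by
    obtain ⟨ga, aga, ea⟩ := ra x₀
    obtain ⟨gat, agat, eat⟩ := rat x₀
    obtain ⟨gb, agb, eb⟩ := rb x₀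
    obtain ⟨gbt, agbt, ebt⟩ := rbt x₀
    rcases dd_common (aga.sub agat) (agb.sub agbt) with h | ⟨n, A', B', cA, cB, hne, h⟩
    · filter_upwards [ea, eat, eb, ebt, nhdsWithin_le_nhds h] with x h1 h2 h3 h4 h5
      simp only [Pi.sub_apply] at h5
      rw [h1, h2, h3, h4]
      exact ⟨by linarith, by linarith⟩
    · exfalso
      have hAB : ∀ᶠ x in nhdsWithin x₀ (Ioi x₀),
          a x - at' x = (x - x₀) ^ n * A' x ∧ b x - bt x = (x - x₀) ^ n * B' x := by
        filter_upwards [ea, eat, eb, ebt, nhdsWithin_le_nhds h] with x h1 h2 h3 h4 h5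
        rw [h1, h2, h3, h4]
        exact h5
      have e1 := dd_single hε hεT f1 f1' hu₁ hv₁ ca cb hpos hx10 hE
        (fun t ht => by filter_upwards [hω.mem_nhds hx₁] with x hx using hobs₁ t ht x hx) cA cB hAB
      have e2 := dd_single hε hεT f2 f2' hu₂ hv₂ ca cb hpos hx10 hE
        (fun t ht => by filter_upwards [hω.mem_nhds hx₁] with x hx using hobs₂ t ht x hx) cA cB hAB
      try simp only at e1 e2
      have hb : B' x₀ = 0 := by linarith
      rw [hb] at e2
      rcases hne with h | h
      · exact h (by linarith)
      · exact h hb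
  obtain ⟨y, hy, hy2⟩ := (mem_nhdsGT_iff_exists_Ioo_subset).1 hev
  have : y ≤ x₀ := by
    apply le_csInf hSne
    intro x hx
    by_contra h
    push Not at h
    have h0 : x₀ ≤ x := csInf_le hSb hx
    rcases h0.eq_or_lt with h1 | h1
    · exact hx.2 (h1 ▸ hE0)
    · exact hx.2 (hy2 ⟨h1, h⟩)
  exact absurd hy (not_lt.2 this)

lemma dd_pa_right {ψ : ℝ → ℝ} (h : PiecewiseAnalytic ψ) : DDRA ψ := by
  obtain ⟨δ, κ, φ, hδ, hmono, hbot, htop, hgap, han, heq⟩ := h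
  intro x₀
  obtain ⟨j, hj, hjmax⟩ : ∃ j : ℤ, κ j ≤ x₀ ∧ ∀ i, κ i ≤ x₀ → i ≤ j := by
    apply Int.exists_greatest_of_bdd
    · obtain ⟨N, hN⟩ := (htop.eventually (eventually_gt_atTop x₀)).exists
      refine ⟨N, fun z hz => ?_⟩
      by_contra h
      push Not at h
      linarith [hmono h]
    · exact (hbot.eventually (eventually_le_atBot x₀)).exists
  have hj1 : x₀ < κ (j + 1) := by
    by_contra h
    have := hjmax (j + 1) (not_lt.1 h)
    linarith
  obtain ⟨g, hg, ga⟩ := analyticWithinAt_iff_exists_analyticAt.1 (han j x₀ ⟨hj, hj1.le⟩)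
  refine ⟨g, ga, ?_⟩
  rw [insert_eq_of_mem (show x₀ ∈ Icc (κ j) (κ (j + 1)) from ⟨hj, hj1.le⟩)] at hg
  have h1 : Ioo x₀ (κ (j + 1)) ∈ nhdsWithin x₀ (Ioi x₀) := Ioo_mem_nhdsGT hj1
  have h2 : nhdsWithin x₀ (Ioi x₀) ≤ nhdsWithin x₀ (Icc (κ j) (κ (j + 1))) := by
    apply nhdsWithin_le_iff.2
    filter_upwards [h1] with y hy
    exact ⟨hj.trans hy.1.le, hy.2.le⟩
  filter_upwards [h1, h2 hg] with x hx hx2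
  rw [heq j x ⟨hj.trans hx.1.le, hx.2⟩]
  exact hx2

lemma dd_pa_left {ψ : ℝ → ℝ} (h : PiecewiseAnalytic ψ) : DDRA (fun x => ψ (-x)) := by
  obtain ⟨δ, κ, φ, hδ, hmono, hbot, htop, hgap, han, heq⟩ := h
  intro y₀
  set x₀ := -y₀ with hx₀
  obtain ⟨j, hj, hjmax⟩ : ∃ j : ℤ, κ j < x₀ ∧ ∀ i, κ i < x₀ → i ≤ j := by
    apply Int.exists_greatest_of_bdd
    · obtain ⟨N, hN⟩ := (htop.eventually (eventually_gt_atTop x₀)).exists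
      refine ⟨N, fun z hz => ?_⟩
      by_contra h
      push Not at h
      linarith [hmono h]
    · exact (hbot.eventually (eventually_lt_atBot x₀)).exists
  have hj1 : x₀ ≤ κ (j + 1) := by
    by_contra h
    have := hjmax (j + 1) (not_le.1 h)
    linarith
  obtain ⟨g, hg, ga⟩ := analyticWithinAt_iff_exists_analyticAt.1 (han j x₀ ⟨hj.le, hj1⟩)
  rw [insert_eq_of_mem (show x₀ ∈ Icc (κ j) (κ (j + 1)) from ⟨hj.le, hj1⟩)] at hg
  have h1 : Ioo (κ j) x₀ ∈ nhdsWithin x₀ (Iio x₀) := Ioo_mem_nhdsLT hj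
  have h2 : nhdsWithin x₀ (Iio x₀) ≤ nhdsWithin x₀ (Icc (κ j) (κ (j + 1))) := by
    apply nhdsWithin_le_iff.2
    filter_upwards [h1] with y hy
    exact ⟨hy.1.le, hy.2.le.trans hj1⟩
  have h3 : ∀ᶠ x in nhdsWithin x₀ (Iio x₀), ψ x = g x := by
    filter_upwards [h1, h2 hg] with x hx hx2
    rw [heq j x ⟨hx.1.le, hx.2.trans_le hj1⟩]
    exact hx2
  refine ⟨fun x => g (-x), ?_, ?_⟩
  · exact AnalyticAt.fun_comp (g := g) (f := fun x : ℝ => -x) ga analyticAt_id.neg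
  · have ht : Tendsto (fun x : ℝ => -x) (nhdsWithin y₀ (Ioi y₀)) (nhdsWithin x₀ (Iio x₀)) :=
      tendsto_neg_nhdsGT
    exact ht.eventually h3

lemma DDRA.neg {ψ : ℝ → ℝ} (h : DDRA ψ) : DDRA (fun x => - ψ x) := by
  intro x₀
  obtain ⟨g, h1, h2⟩ := h x₀
  exact ⟨fun x => - g x, h1.neg, h2.mono fun x hx => by simp only [hx]⟩

lemma DDRA.half_sq {ψ : ℝ → ℝ} (h : DDRA ψ) : DDRA (fun x => (1 / 2) * (ψ x) ^ 2) := by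
  intro x₀
  obtain ⟨g, h1, h2⟩ := h x₀
  exact ⟨fun x => (1 / 2) * (g x) ^ 2, analyticAt_const.mul (h1.pow 2),
    h2.mono fun x hx => by simp only [hx]⟩

/-- Corollary: the drift and diffusion coefficients are uniquely determined by
observation of the expectation and the variance on a small time-space cylinder. -/
theorem drift_diffusion_uniqueness_from_expectation_and_variance
    (T : ℝ) (hT : 0 < T)
    (b bt sigma sigmat : ℝ → ℝ)
    (hb : ClassM b) (hbt : ClassM bt)
    (hs : ClassM sigma) (hst : ClassM sigmat)
    (hspos : ∀ x, 0 < sigma x) (hstpos : ∀ x, 0 < sigmat x)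
    (u₁ u₂ ut₁ ut₂ : ℝ → ℝ → ℝ)
    (hu₁ : IsClassicalSolution T b sigma (fun x => x ^ 1) u₁)
    (hu₂ : IsClassicalSolution T b sigma (fun x => x ^ 2) u₂)
    (hut₁ : IsClassicalSolution T bt sigmat (fun x => x ^ 1) ut₁)
    (hut₂ : IsClassicalSolution T bt sigmat (fun x => x ^ 2) ut₂)
    (ε : ℝ) (hε : ε ∈ Ioo 0 T)
    (ω : Set ℝ) (hω : IsOpen ω) (hωne : ω.Nonempty)
    (hobsE : ∀ t ∈ Ioo 0 ε, ∀ x ∈ ω, u₁ t x = ut₁ t x)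
    (hobsV : ∀ t ∈ Ioo 0 ε, ∀ x ∈ ω,
      u₂ t x - (u₁ t x) ^ 2 = ut₂ t x - (ut₁ t x) ^ 2) :
    ∀ x : ℝ, b x = bt x ∧ sigma x = sigmat x := by
  have hεT : ε ≤ T := hε.2.le
  have h1 : ∀ t ∈ Ico 0 ε, ∀ x ∈ ω, u₁ t x = ut₁ t x := by
    intro t ht x hx
    rcases ht.1.eq_or_lt with h | h
    · rw [← h, hu₁.2.2.2.2.2.2.2.2, hut₁.2.2.2.2.2.2.2.2]
    · exact hobsE t ⟨h, ht.2⟩ x hx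
  have h2 : ∀ t ∈ Ico 0 ε, ∀ x ∈ ω, u₂ t x = ut₂ t x := by
    intro t ht x hx
    rcases ht.1.eq_or_lt with h | h
    · rw [← h, hu₂.2.2.2.2.2.2.2.2, hut₂.2.2.2.2.2.2.2.2]
    · have e1 := hobsV t ⟨h, ht.2⟩ x hx
      rw [hobsE t ⟨h, ht.2⟩ x hx] at e1
      linarith
  obtain ⟨⟨_, lb⟩, pb⟩ := hb
  obtain ⟨⟨_, lbt⟩, pbt⟩ := hbt
  obtain ⟨⟨_, ls⟩, ps⟩ := hs
  obtain ⟨⟨_, lst⟩, pst⟩ := hst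
  have cb := lb.continuous
  have cbt := lbt.continuous
  have cs := ls.continuous
  have cst := lst.continuous
  obtain ⟨x₁, hx₁⟩ := hωne
  have s₁ := dd_of_classical hu₁
  have s₂ := dd_of_classical hu₂
  have st₁ := dd_of_classical hut₁
  have st₂ := dd_of_classical hut₂
  have fin : ∀ x, (1 / 2) * (sigma x) ^ 2 = (1 / 2) * (sigmat x) ^ 2 → sigma x = sigmat x := by
    intro x h
    exact (sq_eq_sq₀ (hspos x).le (hstpos x).le).1 (by linarith)
  intro x
  rcases le_total x₁ x with hx | hx
  · have := dd_right hε.1 hεT s₁ s₂ st₁ st₂ (by fun_prop) (by fun_prop) cb cbt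
      (fun x => by have := hspos x; positivity)
      (dd_pa_right ps).half_sq (dd_pa_right pst).half_sq (dd_pa_right pb) (dd_pa_right pbt)
      hω hx₁ h1 h2 x hx
    exact ⟨this.2, fin x this.1⟩
  · have e1 : (fun x : ℝ => -((-x) ^ 1)) = fun x => x ^ 1 := by ext x; ring
    have e2 : (fun x : ℝ => (-x) ^ 2) = fun x => x ^ 2 := by ext x; ring
    have r₁ := s₁.reflect.neg
    have r₂ := s₂.reflect
    have rt₁ := st₁.reflect.neg
    have rt₂ := st₂.reflect
    simp only [e1] at r₁ rt₁
    simp only [e2] at r₂ rt₂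
    have := dd_right (ω := (fun x : ℝ => -x) ⁻¹' ω) (x₁ := -x₁) hε.1 hεT r₁ r₂ rt₁ rt₂
      (by fun_prop) (by fun_prop) (by fun_prop) (by fun_prop)
      (fun x => by have := hspos (-x); positivity)
      (dd_pa_left ps).half_sq (dd_pa_left pst).half_sq (dd_pa_left pb).neg (dd_pa_left pbt).neg
      (hω.preimage continuous_neg) (by simpa using hx₁)
      (fun t ht x hx => by rw [h1 t ht (-x) hx]) (fun t ht x hx => h2 t ht (-x) hx)
      (-x) (by linarith)
    simp only [neg_neg] at this
    exact ⟨by linarith [this.2], fin x this.1⟩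
end

section
/- Let T > 0, let b : ℝ → ℝ be Lipschitz continuous, let σ and σ̃ belong to the class M with σ(x) > 0 and σ̃(x) > 0 for all x, and let f : ℝ → ℝ be of class C² with f''(x) ≠ 0 for all x ∈ ℝ. Let u be a classical solution of the parabolic equation associated with (b, σ, f) and let ũ be a classical solution of the parabolic equation associated with (b, σ̃, f). If there exist ε ∈ (0, T) and a point x₀ ∈ ℝ such that u(t,x₀) = ũ(t,x₀) and ∂_x u(t,x₀) = ∂_x ũ(t,x₀) for all t ∈ (0, ε), then σ(x) = σ̃(x) for all x ∈ ℝ. -/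
open Set Filter

open Topology

/-- Left-sided minimum in time forces a nonpositive derivative. -/
lemma aux_deriv_nonpos {g : ℝ → ℝ} {g' t r : ℝ} (h : HasDerivAt g g' t) (hr : r < t)
    (hm : ∀ s ∈ Ioo r t, g t ≤ g s) : g' ≤ 0 := by
  have h1 : Tendsto (slope g t) (𝓝[<] t) (𝓝 g') :=
    (hasDerivAt_iff_tendsto_slope.1 h).mono_left
      (nhdsWithin_mono _ (fun x hx => ne_of_lt hx))
  refine le_of_tendsto h1 ?_
  filter_upwards [Ioo_mem_nhdsLT hr] with s hs
  rw [slope_def_field]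
  exact div_nonpos_of_nonneg_of_nonpos (by linarith [hm s hs]) (by linarith [hs.2])

/-- Right-sided minimum forces a nonnegative derivative. -/
lemma aux_deriv_nonneg {g : ℝ → ℝ} {g' t r : ℝ} (h : HasDerivAt g g' t) (hr : t < r)
    (hm : ∀ s ∈ Ioo t r, g t ≤ g s) : 0 ≤ g' := by
  have h1 : Tendsto (slope g t) (𝓝[>] t) (𝓝 g') :=
    (hasDerivAt_iff_tendsto_slope.1 h).mono_left
      (nhdsWithin_mono _ (fun x hx => ne_of_gt hx))
  refine ge_of_tendsto h1 ?_
  filter_upwards [Ioo_mem_nhdsGT hr] with s hs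
  rw [slope_def_field]
  exact div_nonneg (by linarith [hm s hs]) (by linarith [hs.1])

/-- Second order necessary condition at a local minimum. -/
lemma aux_second {g : ℝ → ℝ} {x : ℝ} (hg : ContinuousAt g x) (hm : IsLocalMin g x) :
    0 ≤ deriv (deriv g) x := by
  by_contra hneg
  push Not at hneg
  have hM := isLocalMax_of_deriv_deriv_neg hneg hm.deriv_eq_zero hg
  have hE : g =ᶠ[𝓝 x] fun _ => g x := by
    filter_upwards [hm, hM] with y h1 h2
    exact le_antisymm h2 h1
  have h2 : deriv (deriv g) x = 0 := by
    rw [hE.deriv.deriv_eq]; simp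
  linarith

lemma aux_barrier_deriv (η K μ x0 ts : ℝ) (t x : ℝ) :
    HasDerivAt (fun x => η * (Real.exp (K * (x - x0) + μ * (t - ts)) - 1))
      (η * K * Real.exp (K * (x - x0) + μ * (t - ts))) x := by
  have h : HasDerivAt (fun x => K * (x - x0) + μ * (t - ts)) K x := by
    simpa using (((hasDerivAt_id x).sub_const x0).const_mul K).add_const (μ * (t - ts))
  exact ((h.exp.sub_const 1).const_mul η).congr_deriv (by ring)

lemma aux_barrier_deriv_t (η K μ x0 ts : ℝ) (t x : ℝ) :
    HasDerivAt (fun t => η * (Real.exp (K * (x - x0) + μ * (t - ts)) - 1))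
      (η * μ * Real.exp (K * (x - x0) + μ * (t - ts))) t := by
  have h : HasDerivAt (fun t => K * (x - x0) + μ * (t - ts)) μ t := by
    simpa using (((hasDerivAt_id t).sub_const ts).const_mul μ).const_add (K * (x - x0))
  exact ((h.exp.sub_const 1).const_mul η).congr_deriv (by ring)

set_option maxHeartbeats 2000000 in
lemma aux_key (T : ℝ) (hT : 0 < T) (b s st f : ℝ → ℝ) (hb : Continuous b)
    (hstc : Continuous st) (hst : ∀ x, 0 < st x)
    (hf : ∀ x, 0 < deriv (deriv f) x) (u ut : ℝ → ℝ → ℝ)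
    (hu : IsClassicalSolution T b s f u) (hut : IsClassicalSolution T b st f ut)
    (ε : ℝ) (hε : ε ∈ Ioo 0 T) (x0 y : ℝ) (hxy : x0 < y)
    (hobs : ∀ t ∈ Ioo 0 ε, u t x0 = ut t x0)
    (hobsd : ∀ t ∈ Ioo 0 ε,
      deriv (fun y => u t y) x0 = deriv (fun y => ut t y) x0)
    (hle : ∀ x ∈ Icc x0 y, st x ≤ s x) (hlt : st y < s y) : False := by
  obtain ⟨uc, udt, udx, udxx, -, -, uxxc, upde, u0⟩ := hu
  obtain ⟨vc, vdt, vdx, vdxx, -, -, -, vpde, v0⟩ := hut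
  have h0T : (0:ℝ) ∈ Ico 0 T := ⟨le_rfl, hT⟩
  have hu0 : (fun y => u 0 y) = f := funext u0
  have hv0 : (fun y => ut 0 y) = f := funext v0
  -- positivity of the second derivative for small times
  have e1 : ∀ᶠ t in 𝓝 (0:ℝ), ∀ x ∈ Icc x0 y, t ∈ Ico 0 T →
      0 < deriv (deriv (fun y => u t y)) x := by
    refine isCompact_Icc.eventually_forall_of_forall_eventually
      (P := fun t x => t ∈ Ico 0 T → 0 < deriv (deriv (fun y => u t y)) x) ?_
    intro x _
    have hc := uxxc (0, x) ⟨h0T, mem_univ _⟩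
    have hpos : 0 < deriv (deriv (fun y => u ((0:ℝ), x).1 y)) ((0:ℝ), x).2 := by
      simp only [hu0]; exact hf x
    have h2 := hc.eventually (lt_mem_nhds hpos)
    rw [eventually_nhdsWithin_iff] at h2
    filter_upwards [h2] with z hz hz1
    exact hz ⟨hz1, mem_univ _⟩
  -- growth at y
  obtain ⟨c, hc0, e2⟩ : ∃ c > 0, ∀ᶠ t in 𝓝[>] (0:ℝ), c * t ≤ u t y - ut t y := by
    have hd := (udt 0 h0T y).hasDerivAt.sub (vdt 0 h0T y).hasDerivAt
    have hp := upde 0 h0T y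
    have hq := vpde 0 h0T y
    rw [hu0] at hp
    rw [hv0] at hq
    have hval : 0 < deriv (fun s => u s y) 0 - deriv (fun s => ut s y) 0 := by
      rw [hp, hq]
      have h1 : 0 < (s y ^ 2 - st y ^ 2) * deriv (deriv f) y :=
        mul_pos (by nlinarith [hst y]) (hf y)
      nlinarith
    set d := deriv (fun s => u s y) 0 - deriv (fun s => ut s y) 0 with hdd
    refine ⟨d / 2, by linarith, ?_⟩
    have h1 := (hasDerivAt_iff_tendsto_slope.1 hd).mono_left
      (nhdsWithin_mono (0:ℝ) (s := Ioi 0) (fun x hx => ne_of_gt hx))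
    have h2 := h1.eventually (lt_mem_nhds (show d / 2 < d by linarith))
    filter_upwards [h2, self_mem_nhdsWithin] with t ht ht0
    have ht0' : 0 < t := ht0
    rw [slope_def_field] at ht
    simp only [Pi.sub_apply, u0, v0, sub_self, sub_zero] at ht
    rw [lt_div_iff₀ ht0'] at ht
    exact ht.le
  obtain ⟨τ1, hτ1, e1'⟩ := Metric.eventually_nhds_iff.1 e1
  obtain ⟨τ2, hτ2, e2'⟩ := (mem_nhdsGT_iff_exists_Ioo_subset).1 e2
  have hτ2' : 0 < τ2 := hτ2
  obtain ⟨ts, hts0, hts⟩ : ∃ ts, 0 < ts ∧ ts < min τ1 (min τ2 ε) :=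
    exists_between (lt_min hτ1 (lt_min hτ2' hε.1))
  have ht1 : ts < τ1 := hts.trans_le (min_le_left _ _)
  have ht2 : ts < τ2 := hts.trans_le ((min_le_right _ _).trans (min_le_left _ _))
  have ht3 : ts < ε := hts.trans_le ((min_le_right _ _).trans (min_le_right _ _))
  have htT : ts < T := ht3.trans hε.2
  have hI : ∀ t ∈ Icc 0 ts, t ∈ Ico 0 T := fun t ht => ⟨ht.1, ht.2.trans_lt htT⟩
  have hpos : ∀ t ∈ Icc 0 ts, ∀ x ∈ Icc x0 y, 0 < deriv (deriv (fun y => u t y)) x := by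
    intro t ht x hx
    refine e1' ?_ x hx (hI t ht)
    rw [Real.dist_eq, sub_zero, abs_of_nonneg ht.1]
    linarith [ht.2]
  have hgrow : ∀ t ∈ Icc 0 ts, c * t ≤ u t y - ut t y := by
    intro t ht
    rcases ht.1.eq_or_lt with h | h
    · rw [← h, u0, v0]; simp
    · exact e2' ⟨h, ht.2.trans_lt ht2⟩
  -- bounds for coefficients
  obtain ⟨a0, ha0, hab⟩ : ∃ a0 > 0, ∀ x ∈ Icc x0 y, a0 ≤ 1 / 2 * st x ^ 2 := by
    obtain ⟨xm, hxm, hmin⟩ := (isCompact_Icc (a := x0) (b := y)).exists_isMinOn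
      (nonempty_Icc.2 hxy.le) (f := fun x => 1 / 2 * st x ^ 2) (by fun_prop)
    exact ⟨_, by have := hst xm; positivity, fun x hx => hmin hx⟩
  obtain ⟨B, hB⟩ : ∃ B, ∀ x ∈ Icc x0 y, |b x| ≤ B := by
    obtain ⟨B, hB⟩ := (isCompact_Icc (a := x0) (b := y)).exists_bound_of_continuousOn
      (f := b) hb.continuousOn
    exact ⟨B, hB⟩
  have hB0 : 0 ≤ B := (abs_nonneg _).trans (hB x0 ⟨le_rfl, hxy.le⟩)
  have hl : 0 < (y - x0) / ts := div_pos (by linarith) hts0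
  obtain ⟨K, hKdef⟩ : ∃ K, K = (B + (y - x0) / ts + 1) / a0 := ⟨_, rfl⟩
  have hK : 0 < K := by rw [hKdef]; positivity
  have hKa : a0 * K = B + (y - x0) / ts + 1 := by rw [hKdef]; field_simp
  obtain ⟨μ, hμdef⟩ : ∃ μ, μ = K * ((y - x0) / ts) := ⟨_, rfl⟩
  have hμ : 0 < μ := by rw [hμdef]; positivity
  have hμts : μ * ts = K * (y - x0) := by rw [hμdef]; field_simp
  obtain ⟨η, hηdef⟩ : ∃ η, η = c / (μ * Real.exp (μ * ts)) := ⟨_, rfl⟩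
  have hη : 0 < η := by rw [hηdef]; positivity
  have hηc : η * (μ * Real.exp (μ * ts)) = c := by
    rw [hηdef]; field_simp
  -- comparison function
  let V : ℝ → ℝ → ℝ := fun t x => η * (Real.exp (K * (x - x0) + μ * (t - ts)) - 1)
  let z : ℝ → ℝ → ℝ := fun t x => u t x - ut t x - V t x
  have hVx : ∀ t x, HasDerivAt (fun x => V t x)
      (η * K * Real.exp (K * (x - x0) + μ * (t - ts))) x := fun t x =>
    aux_barrier_deriv η K μ x0 ts t x
  have hVt : ∀ t x, HasDerivAt (fun t => V t x)
      (η * μ * Real.exp (K * (x - x0) + μ * (t - ts))) t := fun t x =>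
    aux_barrier_deriv_t η K μ x0 ts t x
  have hVxx : ∀ t x, HasDerivAt (deriv (fun x => V t x))
      (η * K * K * Real.exp (K * (x - x0) + μ * (t - ts))) x := by
    intro t x
    have : deriv (fun x => V t x) =
        fun x => (η * K) * (Real.exp (K * (x - x0) + μ * (t - ts)) - 1) + η * K := by
      funext x; rw [(hVx t x).deriv]; ring
    rw [this]
    exact (aux_barrier_deriv (η * K) K μ x0 ts t x).add_const _
  have hzx : ∀ t ∈ Icc 0 ts, ∀ x, HasDerivAt (fun x => z t x)
      (deriv (fun y => u t y) x - deriv (fun y => ut t y) x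
        - η * K * Real.exp (K * (x - x0) + μ * (t - ts))) x := fun t ht x =>
    ((udx t (hI t ht) x).hasDerivAt.sub (vdx t (hI t ht) x).hasDerivAt).sub (hVx t x)
  have hzt : ∀ t ∈ Icc 0 ts, ∀ x, HasDerivAt (fun t => z t x)
      (deriv (fun s => u s x) t - deriv (fun s => ut s x) t
        - η * μ * Real.exp (K * (x - x0) + μ * (t - ts))) t := fun t ht x =>
    ((udt t (hI t ht) x).hasDerivAt.sub (vdt t (hI t ht) x).hasDerivAt).sub (hVt t x)
  have hzxx : ∀ t ∈ Icc 0 ts, ∀ x, deriv (deriv (fun x => z t x)) x =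
      deriv (deriv (fun y => u t y)) x - deriv (deriv (fun y => ut t y)) x
        - η * K * K * Real.exp (K * (x - x0) + μ * (t - ts)) := by
    intro t ht x
    have : deriv (fun x => z t x) = fun x => deriv (fun y => u t y) x - deriv (fun y => ut t y) x
        - deriv (fun x => V t x) x := by
      funext x; rw [(hzx t ht x).deriv, (hVx t x).deriv]
    rw [this]
    exact (((udxx t (hI t ht) x).hasDerivAt.sub (vdxx t (hI t ht) x).hasDerivAt).sub
      (hVxx t x)).deriv
  have hzc : ContinuousOn (fun p : ℝ × ℝ => z p.1 p.2) (Icc 0 ts ×ˢ Icc x0 y) := by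
    have hsub : Icc 0 ts ×ˢ Icc x0 y ⊆ Ico 0 T ×ˢ (univ : Set ℝ) :=
      fun p hp => ⟨hI _ hp.1, mem_univ _⟩
    refine ((uc.mono hsub).sub (vc.mono hsub)).sub (Continuous.continuousOn ?_)
    simp only [V]
    fun_prop
  have hznn : ∀ t ∈ Icc 0 ts, ∀ x ∈ Icc x0 y, 0 ≤ z t x := by
    by_contra hcon
    push Not at hcon
    obtain ⟨t', ht', x', hx', hneg'⟩ := hcon
    obtain ⟨⟨t, x⟩, ⟨ht, hx⟩, hmin⟩ := (isCompact_Icc.prod isCompact_Icc).exists_isMinOn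
      ⟨(t', x'), ⟨ht', hx'⟩⟩ hzc
    simp only at ht hx
    have hmin' : ∀ s ∈ Icc 0 ts, ∀ r ∈ Icc x0 y, z t x ≤ z s r := fun s hs r hr =>
      hmin (show (s, r) ∈ Icc 0 ts ×ˢ Icc x0 y from ⟨hs, hr⟩)
    have hneg : z t x < 0 := (hmin' t' ht' x' hx').trans_lt hneg'
    have htpos : 0 < t := by
      rcases ht.1.eq_or_lt with h | h
      · exfalso
        subst h
        have : K * (x - x0) + μ * (0 - ts) ≤ 0 := by nlinarith [hx.2]
        have h2 := Real.exp_le_one_iff.2 this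
        have h3 : z 0 x = - (η * (Real.exp (K * (x - x0) + μ * (0 - ts)) - 1)) := by
          simp only [z, V, u0, v0]; ring
        nlinarith
      · exact h
    have hxl : x0 < x := by
      rcases hx.1.eq_or_lt with h | h
      · exfalso
        subst h
        have : K * (x0 - x0) + μ * (t - ts) ≤ 0 := by nlinarith [ht.2]
        have h2 := Real.exp_le_one_iff.2 this
        have h3 : z t x0 = - (η * (Real.exp (K * (x0 - x0) + μ * (t - ts)) - 1)) := by
          simp only [z, V, hobs t ⟨htpos, ht.2.trans_lt ht3⟩]; ring
        nlinarith
      · exact h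
    have hxr : x < y := by
      rcases hx.2.eq_or_lt with h | h
      · exfalso
        subst h
        have he : K * (x - x0) + μ * (t - ts) = μ * t := by rw [← hμts]; ring
        have h3 : z t x = u t x - ut t x - η * (Real.exp (μ * t) - 1) := by
          simp only [z, V, he]
        have h4 := hgrow t ht
        have h5 : Real.exp (μ * t) - 1 ≤ μ * t * Real.exp (μ * t) := by
          have h6 := Real.add_one_le_exp (-(μ * t))
          have h7 : Real.exp (-(μ * t)) * Real.exp (μ * t) = 1 := by
            rw [← Real.exp_add]; simp
          nlinarith [Real.exp_pos (μ * t)]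
        have h8 : Real.exp (μ * t) ≤ Real.exp (μ * ts) :=
          Real.exp_le_exp.2 (mul_le_mul_of_nonneg_left ht.2 hμ.le)
        have h9 : μ * t * Real.exp (μ * t) ≤ μ * t * Real.exp (μ * ts) :=
          mul_le_mul_of_nonneg_left h8 (by positivity)
        have h10 : η * (Real.exp (μ * t) - 1) ≤ η * (μ * t * Real.exp (μ * ts)) :=
          mul_le_mul_of_nonneg_left (h5.trans h9) hη.le
        have h11 : η * (μ * t * Real.exp (μ * ts)) = c * t := by rw [← hηc]; ring
        linarith
      · exact h
    have hlm : IsLocalMin (fun x => z t x) x := by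
      filter_upwards [Icc_mem_nhds hxl hxr] with r hr
      exact hmin' t ht r hr
    have d1 := hlm.hasDerivAt_eq_zero (hzx t ht x)
    have d2 := aux_second (hzx t ht x).continuousAt hlm
    rw [hzxx t ht x] at d2
    have d3 := aux_deriv_nonpos (hzt t ht x) htpos
      (fun s hs => hmin' s ⟨hs.1.le, hs.2.le.trans ht.2⟩ x hx)
    rw [upde t (hI t ht) x, vpde t (hI t ht) x] at d3
    have hE := Real.exp_pos (K * (x - x0) + μ * (t - ts))
    have hU := hpos t ht x hx
    set E := Real.exp (K * (x - x0) + μ * (t - ts))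
    set U2 := deriv (deriv (fun y => u t y)) x
    set W2 := deriv (deriv (fun y => ut t y)) x
    set U1 := deriv (fun y => u t y) x
    set W1 := deriv (fun y => ut t y) x
    have hA := hab x hx
    have hS : 0 ≤ (s x ^ 2 - st x ^ 2) * U2 :=
      mul_nonneg (by nlinarith [hst x, hle x hx]) hU.le
    have hbx := neg_le_of_abs_le (hB x hx)
    have hq : 0 ≤ 1 / 2 * st x ^ 2 * (U2 - W2 - η * K * K * E) :=
      mul_nonneg (by positivity) d2
    have hr : b x * (U1 - W1 - η * K * E) = 0 := by rw [d1, mul_zero]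
    have hm : 0 < η * K * E := by positivity
    have hfin : 0 < η * K * E * (1 / 2 * st x ^ 2 * K + b x - (y - x0) / ts) := by
      refine mul_pos hm ?_
      nlinarith [mul_le_mul_of_nonneg_right hA hK.le]
    have hμ' : η * μ * E = η * K * E * ((y - x0) / ts) := by rw [hμdef]; ring
    nlinarith
  -- conclusion at (ts, x0)
  have htsI : ts ∈ Icc 0 ts := ⟨hts0.le, le_rfl⟩
  have hz0 : z ts x0 = 0 := by
    simp only [z, V, hobs ts ⟨hts0, ht3⟩]; simp
  have hfin := aux_deriv_nonneg (hzx ts htsI x0) hxy (fun r hr => by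
    rw [hz0]; exact hznn ts htsI r ⟨hr.1.le, hr.2.le⟩)
  rw [hobsd ts ⟨hts0, ht3⟩] at hfin
  have : 0 < η * K * Real.exp (K * (x0 - x0) + μ * (ts - ts)) := by positivity
  linarith

lemma aux_neg {T : ℝ} {b s f : ℝ → ℝ} {u : ℝ → ℝ → ℝ} (h : IsClassicalSolution T b s f u) :
    IsClassicalSolution T b s (fun x => - f x) (fun t x => - u t x) := by
  obtain ⟨h1, h2, h3, h4, h5, h6, h7, h8, h9⟩ := h
  have e1 : ∀ t, deriv (fun y => - u t y) = fun x => - deriv (fun y => u t y) x := by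
    intro t; funext x; exact deriv.fun_neg
  refine ⟨h1.neg, fun t ht x => (h2 t ht x).neg, fun t ht x => (h3 t ht x).neg, ?_, ?_, ?_, ?_, ?_,
    fun x => by simp only [h9]⟩
  · intro t ht x; rw [e1]; exact (h4 t ht x).neg
  · simp only [deriv.fun_neg]; exact h5.neg
  · simp only [deriv.fun_neg]; exact h6.neg
  · simp only [e1, deriv.fun_neg]; exact h7.neg
  · intro t ht x
    simp only [e1, deriv.fun_neg, h8 t ht x]
    ring

lemma aux_refl {T : ℝ} {b s f : ℝ → ℝ} {u : ℝ → ℝ → ℝ} (h : IsClassicalSolution T b s f u) :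
    IsClassicalSolution T (fun x => - b (-x)) (fun x => s (-x)) (fun x => f (-x))
      (fun t x => u t (-x)) := by
  obtain ⟨h1, h2, h3, h4, h5, h6, h7, h8, h9⟩ := h
  have e1 : ∀ t, deriv (fun y => u t (-y)) = fun x => - deriv (fun y => u t y) (-x) := by
    intro t; funext x; exact deriv_comp_neg (fun y => u t y) x
  have e2 : ∀ t x, deriv (deriv (fun y => u t (-y))) x = deriv (deriv (fun y => u t y)) (-x) := by
    intro t x
    rw [e1, deriv.fun_neg, deriv_comp_neg (deriv (fun y => u t y)) x, neg_neg]
  have hcomp : ∀ g : ℝ × ℝ → ℝ, ContinuousOn g (Ico 0 T ×ˢ univ) →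
      ContinuousOn (fun p : ℝ × ℝ => g (p.1, -p.2)) (Ico 0 T ×ˢ univ) := by
    intro g hg
    exact hg.comp (f := fun p : ℝ × ℝ => (p.1, -p.2)) (by fun_prop)
      (fun p hp => ⟨hp.1, mem_univ _⟩)
  refine ⟨hcomp _ h1, fun t ht x => h2 t ht (-x), ?_, ?_, hcomp _ h5, ?_, ?_, ?_,
    fun x => by simp only [h9]⟩
  · intro t ht x
    exact (h3 t ht (-x)).comp x differentiable_neg.differentiableAt
  · intro t ht x; rw [e1]
    exact ((h4 t ht (-x)).comp x differentiable_neg.differentiableAt).neg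
  · simp only [e1]; exact (hcomp _ h6).neg
  · simp only [e2]; exact hcomp _ h7
  · intro t ht x
    rw [e2, e1, h8 t ht (-x)]
    ring

/-- Dichotomy for a piecewise analytic function: one-sided analytic extension. -/
lemma aux_right {ψ : ℝ → ℝ} (h : PiecewiseAnalytic ψ) (p : ℝ) :
    ∃ g : ℝ → ℝ, AnalyticAt ℝ g p ∧ ψ =ᶠ[𝓝[>] p] g := by
  obtain ⟨δ, κ, φ, hδ, hmono, hbot, htop, -, han, heq⟩ := h
  obtain ⟨j, hj⟩ : ∃ j : ℤ, p ∈ Ico (κ j) (κ (j + 1)) := by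
    obtain ⟨n, hn⟩ := (htop.eventually_gt_atTop p).exists
    obtain ⟨m, hm⟩ := (hbot.eventually_le_atBot p).exists
    obtain ⟨j, hj1, hj2⟩ := Int.exists_greatest_of_bdd (P := fun i => κ i ≤ p)
      ⟨n, fun z hz => (hmono.lt_iff_lt.1 (hz.trans_lt hn)).le⟩ ⟨m, hm⟩
    refine ⟨j, hj1, ?_⟩
    by_contra hc
    have := hj2 (j + 1) (not_lt.1 hc)
    omega
  have hA := han j p ⟨hj.1, hj.2.le⟩
  obtain ⟨g, hg, hga⟩ := hA.exists_analyticAt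
  refine ⟨g, hga.2, ?_⟩
  filter_upwards [Ioo_mem_nhdsGT hj.2] with x hx
  exact (heq j x ⟨hj.1.trans hx.1.le, hx.2⟩).trans
    (hga.1 (mem_insert_of_mem _ ⟨hj.1.trans hx.1.le, hx.2.le⟩))

lemma aux_left {ψ : ℝ → ℝ} (h : PiecewiseAnalytic ψ) (p : ℝ) :
    ∃ g : ℝ → ℝ, AnalyticAt ℝ g p ∧ ψ =ᶠ[𝓝[<] p] g := by
  obtain ⟨δ, κ, φ, hδ, hmono, hbot, htop, -, han, heq⟩ := h
  obtain ⟨j, hj⟩ : ∃ j : ℤ, p ∈ Ioc (κ j) (κ (j + 1)) := by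
    obtain ⟨n, hn⟩ := (htop.eventually_gt_atTop p).exists
    obtain ⟨m, hm⟩ := (hbot.eventually_lt_atBot p).exists
    obtain ⟨j, hj1, hj2⟩ := Int.exists_greatest_of_bdd (P := fun i => κ i < p)
      ⟨n, fun z hz => (hmono.lt_iff_lt.1 (hz.trans hn)).le⟩ ⟨m, hm⟩
    refine ⟨j, hj1, ?_⟩
    by_contra hc
    have := hj2 (j + 1) (not_le.1 hc)
    omega
  have hA := han j p ⟨hj.1.le, hj.2⟩
  obtain ⟨g, hg, hga⟩ := hA.exists_analyticAt
  refine ⟨g, hga.2, ?_⟩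
  filter_upwards [Ioo_mem_nhdsLT hj.1] with x hx
  exact (heq j x ⟨hx.1.le, hx.2.trans_le hj.2⟩).trans
    (hga.1 (mem_insert_of_mem _ ⟨hx.1.le, hx.2.le.trans hj.2⟩))

lemma aux_dich_right {s st : ℝ → ℝ} (hs : PiecewiseAnalytic s) (hst : PiecewiseAnalytic st)
    (p : ℝ) : (∀ᶠ x in 𝓝[>] p, s x - st x = 0) ∨ (∀ᶠ x in 𝓝[>] p, s x - st x ≠ 0) := by
  obtain ⟨g, hg, hge⟩ := aux_right hs p
  obtain ⟨k, hk, hke⟩ := aux_right hst p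
  rcases (hg.sub hk).eventually_eq_zero_or_eventually_ne_zero with h | h
  · left
    filter_upwards [hge, hke, h.filter_mono nhdsWithin_le_nhds] with x h1 h2 h3
    rw [h1, h2]; exact h3
  · right
    filter_upwards [hge, hke, h.filter_mono (nhdsWithin_mono p (s := Ioi p)
      (fun x hx => ne_of_gt hx))] with x h1 h2 h3
    rw [h1, h2]; exact h3

lemma aux_dich_left {s st : ℝ → ℝ} (hs : PiecewiseAnalytic s) (hst : PiecewiseAnalytic st)
    (p : ℝ) : (∀ᶠ x in 𝓝[<] p, s x - st x = 0) ∨ (∀ᶠ x in 𝓝[<] p, s x - st x ≠ 0) := by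
  obtain ⟨g, hg, hge⟩ := aux_left hs p
  obtain ⟨k, hk, hke⟩ := aux_left hst p
  rcases (hg.sub hk).eventually_eq_zero_or_eventually_ne_zero with h | h
  · left
    filter_upwards [hge, hke, h.filter_mono nhdsWithin_le_nhds] with x h1 h2 h3
    rw [h1, h2]; exact h3
  · right
    filter_upwards [hge, hke, h.filter_mono (nhdsWithin_mono p (s := Iio p)
      (fun x hx => ne_of_lt hx))] with x h1 h2 h3
    rw [h1, h2]; exact h3

/-- A continuous function vanishing on `[x0,q)`, without zeros on `(q,r)`, positive at
`y ∈ (q,r)`, is nonnegative on `[x0,y]`. -/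
lemma aux_pos {D : ℝ → ℝ} (hD : Continuous D) {x0 q r y : ℝ}
    (hz : ∀ x ∈ Ico x0 q, D x = 0) (hne : ∀ x ∈ Ioo q r, D x ≠ 0) (hy : y ∈ Ioo q r)
    (hpos : 0 < D y) : ∀ x ∈ Icc x0 y, 0 ≤ D x := by
  have h1 : ∀ x ∈ Ioc q y, 0 ≤ D x := by
    intro x hx
    by_contra hc
    push Not at hc
    obtain ⟨w, hw, hw0⟩ := intermediate_value_Icc hx.2 hD.continuousOn
      (show (0:ℝ) ∈ Icc (D x) (D y) from ⟨hc.le, hpos.le⟩)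
    exact hne w ⟨hx.1.trans_le hw.1, hw.2.trans_lt hy.2⟩ hw0
  intro x hx
  rcases lt_trichotomy x q with h | h | h
  · exact (hz x ⟨hx.1, h⟩).ge
  · subst h
    refine ge_of_tendsto ((hD.tendsto x).mono_left (nhdsWithin_le_nhds (s := Ioi x))) ?_
    filter_upwards [Ioc_mem_nhdsGT hy.1] with w hw
    exact h1 w hw
  · exact h1 x ⟨h, hx.2⟩

lemma aux_sign {D : ℝ → ℝ} (hD : Continuous D)
    (hdich : ∀ p, (∀ᶠ x in 𝓝[>] p, D x = 0) ∨ (∀ᶠ x in 𝓝[>] p, D x ≠ 0))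
    {x0 x1 : ℝ} (h01 : x0 ≤ x1) (hx1 : D x1 ≠ 0) :
    ∃ y, x0 < y ∧ ((0 < D y ∧ ∀ x ∈ Icc x0 y, 0 ≤ D x) ∨
      (D y < 0 ∧ ∀ x ∈ Icc x0 y, D x ≤ 0)) := by
  let S : Set ℝ := {x | x0 ≤ x ∧ D x ≠ 0}
  have hSne : S.Nonempty := ⟨x1, h01, hx1⟩
  have hSb : BddBelow S := ⟨x0, fun x hx => hx.1⟩
  obtain ⟨q, hq⟩ : ∃ q, q = sInf S := ⟨_, rfl⟩
  have hq0 : x0 ≤ q := by rw [hq]; exact le_csInf hSne (fun x hx => hx.1)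
  have hz : ∀ x ∈ Ico x0 q, D x = 0 := by
    intro x hx
    by_contra hc
    have : q ≤ x := by rw [hq]; exact csInf_le hSb ⟨hx.1, hc⟩
    exact absurd hx.2 (not_lt.2 this)
  rcases hdich q with h | h
  · exfalso
    have hDq : D q = 0 := by
      have t1 : Tendsto D (𝓝[>] q) (𝓝 (D q)) := (hD.tendsto q).mono_left nhdsWithin_le_nhds
      have t2 : Tendsto D (𝓝[>] q) (𝓝 0) :=
        tendsto_const_nhds.congr' (by filter_upwards [h] with x hx using hx.symm)
      exact tendsto_nhds_unique t1 t2
    obtain ⟨r, hr, hsub⟩ := mem_nhdsGT_iff_exists_Ioo_subset.1 h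
    obtain ⟨w, hw, hwr⟩ := exists_lt_of_csInf_lt hSne (show sInf S < r by rw [← hq]; exact hr)
    have hqw : q ≤ w := by rw [hq]; exact csInf_le hSb hw
    rcases hqw.eq_or_lt with h' | h'
    · exact hw.2 (h' ▸ hDq)
    · exact hw.2 (hsub ⟨h', hwr⟩)
  · obtain ⟨r, hr, hsub⟩ := mem_nhdsGT_iff_exists_Ioo_subset.1 h
    obtain ⟨y, hy1, hy2⟩ := exists_between (show q < r from hr)
    refine ⟨y, hq0.trans_lt hy1, ?_⟩
    rcases lt_or_gt_of_ne (hsub ⟨hy1, hy2⟩ : D y ≠ 0) with hlt | hgt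
    · right
      refine ⟨hlt, fun x hx => ?_⟩
      have := aux_pos (D := fun x => - D x) hD.neg (fun x hx => by simp [hz x hx])
        (fun x hx => neg_ne_zero.2 (hsub hx)) ⟨hy1, hy2⟩ (by simpa using hlt) x hx
      linarith
    · left
      exact ⟨hgt, aux_pos hD hz (fun x hx => hsub hx) ⟨hy1, hy2⟩ hgt⟩

lemma aux_main (T : ℝ) (hT : 0 < T) (b s st f : ℝ → ℝ) (hb : Continuous b)
    (hsc : Continuous s) (hstc : Continuous st) (hs : ∀ x, 0 < s x) (hst : ∀ x, 0 < st x)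
    (hdich : ∀ p, (∀ᶠ x in 𝓝[>] p, s x - st x = 0) ∨ (∀ᶠ x in 𝓝[>] p, s x - st x ≠ 0))
    (hf : ∀ x, 0 < deriv (deriv f) x) (u ut : ℝ → ℝ → ℝ)
    (hu : IsClassicalSolution T b s f u) (hut : IsClassicalSolution T b st f ut)
    (ε : ℝ) (hε : ε ∈ Ioo 0 T) (x0 : ℝ)
    (hobs : ∀ t ∈ Ioo 0 ε, u t x0 = ut t x0)
    (hobsd : ∀ t ∈ Ioo 0 ε,
      deriv (fun y => u t y) x0 = deriv (fun y => ut t y) x0) :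
    ∀ x, x0 ≤ x → s x = st x := by
  intro x hx
  by_contra hne
  obtain ⟨y, hy, h⟩ := aux_sign (D := fun x => s x - st x) (hsc.sub hstc) hdich hx
    (sub_ne_zero.2 hne)
  rcases h with ⟨h1, h2⟩ | ⟨h1, h2⟩
  · exact aux_key T hT b s st f hb hstc hst hf u ut hu hut ε hε x0 y hy hobs hobsd
      (fun x hx => sub_nonneg.1 (h2 x hx)) (sub_pos.1 h1)
  · exact aux_key T hT b st s f hb hsc hs hf ut u hut hu ε hε x0 y hy
      (fun t ht => (hobs t ht).symm) (fun t ht => (hobsd t ht).symm)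
      (fun x hx => sub_nonpos.1 (h2 x hx)) (sub_neg.1 h1)

lemma aux_full (T : ℝ) (hT : 0 < T) (b s st f : ℝ → ℝ) (hb : Continuous b)
    (hsc : Continuous s) (hstc : Continuous st) (hs : ∀ x, 0 < s x) (hst : ∀ x, 0 < st x)
    (hsp : PiecewiseAnalytic s) (hstp : PiecewiseAnalytic st)
    (hf : ∀ x, 0 < deriv (deriv f) x) (u ut : ℝ → ℝ → ℝ)
    (hu : IsClassicalSolution T b s f u) (hut : IsClassicalSolution T b st f ut)
    (ε : ℝ) (hε : ε ∈ Ioo 0 T) (x0 : ℝ)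
    (hobs : ∀ t ∈ Ioo 0 ε, u t x0 = ut t x0)
    (hobsd : ∀ t ∈ Ioo 0 ε,
      deriv (fun y => u t y) x0 = deriv (fun y => ut t y) x0) :
    ∀ x, s x = st x := by
  intro x
  rcases le_total x0 x with h | h
  · exact aux_main T hT b s st f hb hsc hstc hs hst (aux_dich_right hsp hstp) hf u ut hu hut ε hε
      x0 hobs hobsd x h
  · have key := aux_main T hT (fun x => - b (-x)) (fun x => s (-x)) (fun x => st (-x))
      (fun x => f (-x)) (by fun_prop) (by fun_prop) (by fun_prop) (fun x => hs _) (fun x => hst _)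
      (fun p => by
        have hn : Tendsto (fun x : ℝ => -x) (𝓝[>] p) (𝓝[<] (-p)) := tendsto_neg_nhdsGT
        rcases aux_dich_left hsp hstp (-p) with h | h
        · exact Or.inl (hn.eventually h)
        · exact Or.inr (hn.eventually h))
      (fun x => by
        have e1 : deriv (fun y => f (-y)) = fun x => - deriv f (-x) := by
          funext x; exact deriv_comp_neg f x
        rw [e1, deriv.fun_neg, deriv_comp_neg (deriv f) x, neg_neg]
        exact hf _)
      _ _ (aux_refl hu) (aux_refl hut) ε hε (-x0)
      (fun t ht => by simpa using hobs t ht)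
      (fun t ht => by
        rw [deriv_comp_neg (fun y => u t y), deriv_comp_neg (fun y => ut t y), neg_neg,
          hobsd t ht])
      (-x) (by linarith)
    simpa using key

/-- Pointwise-observation variant of Theorem 2: the diffusion coefficient is uniquely
determined by the values and first spatial derivatives of the solution at a single
point, for small times. -/
theorem diffusion_uniqueness_pointwise
    (T : ℝ) (hT : 0 < T)
    (b sigma sigmat : ℝ → ℝ)
    (hbLip : ∃ K, LipschitzWith K b)
    (hs : ClassM sigma) (hst : ClassM sigmat)
    (hspos : ∀ x, 0 < sigma x) (hstpos : ∀ x, 0 < sigmat x)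
    (f : ℝ → ℝ) (hf : ContDiff ℝ 2 f) (hfdd : ∀ x, deriv (deriv f) x ≠ 0)
    (u ut : ℝ → ℝ → ℝ)
    (hu : IsClassicalSolution T b sigma f u)
    (hut : IsClassicalSolution T b sigmat f ut)
    (ε : ℝ) (hε : ε ∈ Ioo 0 T) (x₀ : ℝ)
    (hobs : ∀ t ∈ Ioo 0 ε, u t x₀ = ut t x₀)
    (hobsd : ∀ t ∈ Ioo 0 ε,
      deriv (fun y => u t y) x₀ = deriv (fun y => ut t y) x₀) :
    ∀ x : ℝ, sigma x = sigmat x := by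
  obtain ⟨⟨_, hsl⟩, hsp⟩ := hs
  obtain ⟨⟨_, hstl⟩, hstp⟩ := hst
  obtain ⟨_, hbl⟩ := hbLip
  have hcont : Continuous (deriv (deriv f)) := by
    have h := hf.continuous_iteratedDeriv 2 le_rfl
    rwa [iteratedDeriv_succ, iteratedDeriv_one] at h
  have hsign : (∀ x, 0 < deriv (deriv f) x) ∨ (∀ x, deriv (deriv f) x < 0) := by
    by_contra hc
    push Not at hc
    obtain ⟨⟨p, hp⟩, ⟨q, hq⟩⟩ := hc
    obtain ⟨w, hw⟩ := mem_range_of_exists_le_of_exists_ge hcont ⟨p, hp⟩ ⟨q, hq⟩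
    exact hfdd w hw
  rcases hsign with h | h
  · exact aux_full T hT b sigma sigmat f hbl.continuous hsl.continuous hstl.continuous
      hspos hstpos hsp hstp h u ut hu hut ε hε x₀ hobs hobsd
  · refine aux_full T hT b sigma sigmat (fun x => - f x) hbl.continuous hsl.continuous
      hstl.continuous hspos hstpos hsp hstp ?_ _ _ (aux_neg hu) (aux_neg hut) ε hε x₀ ?_ ?_
    · intro x
      have e1 : deriv (fun y => - f y) = fun x => - deriv f x := by
        funext x; exact deriv.fun_neg
      rw [e1, deriv.fun_neg]
      linarith [h x]
    · intro t ht
      simp only [hobs t ht]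
    · intro t ht
      simp only [deriv.fun_neg, hobsd t ht]
end

section
/- Let ψ : ℝ → ℝ be piecewise analytic, and let a < b be real numbers such that ψ(x) = 0 for all x ∈ [a, b]. Then there exists δ > 0 such that ψ has a constant sign on [a, b + δ], i.e., either ψ(x) ≥ 0 for all x ∈ [a, b + δ] or ψ(x) ≤ 0 for all x ∈ [a, b + δ]. Consequently, for a piecewise analytic ψ and a point x₀, if the supremum x₁ = sup{x > x₀ : ψ has a constant sign on [x₀, x]} is attained with ψ ≡ 0 on [x₀, x₁], then x₁ = +∞. -/
open Set Filter

/-- `ψ` has a constant sign on `s`: it is nonnegative on all of `s` or nonpositive on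
all of `s`. -/
def ConstSignOn (ψ : ℝ → ℝ) (s : Set ℝ) : Prop :=
  (∀ x ∈ s, 0 ≤ ψ x) ∨ (∀ x ∈ s, ψ x ≤ 0)

/-- If a piecewise analytic function vanishes on `[a, b]` (with `a < b`), then it keeps
a constant sign on `[a, b + δ]` for some `δ > 0`.  Consequently, if
`x₁ = sup {x > x₀ : ψ has a constant sign on [x₀, x]}` were a (finite) real number with
`ψ ≡ 0` on `[x₀, x₁]`, a contradiction would follow; i.e. the supremum is `+∞`. -/
theorem piecewiseAnalytic_constant_sign_extension
    (ψ : ℝ → ℝ) (hψ : PiecewiseAnalytic ψ) :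
    (∀ a b : ℝ, a < b → (∀ x ∈ Icc a b, ψ x = 0) →
      ∃ δ > 0, ConstSignOn ψ (Icc a (b + δ))) ∧
    (∀ x₀ x₁ : ℝ, x₀ < x₁ → (∀ x ∈ Icc x₀ x₁, ψ x = 0) →
      IsLUB {x : ℝ | x₀ < x ∧ ConstSignOn ψ (Icc x₀ x)} x₁ → False) := by
  have key : ∀ a b : ℝ, a < b → (∀ x ∈ Icc a b, ψ x = 0) →
      ∃ δ > 0, ConstSignOn ψ (Icc a (b + δ)) := by
    intro a b hab hz
    obtain ⟨d, κ, φ, hd, hκ, hbot, htop, hgap, hφ, hψφ⟩ := hψ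
    obtain ⟨j, hj1, hj2⟩ : ∃ j : ℤ, κ j ≤ b ∧ b < κ (j + 1) := by
      obtain ⟨k, hk⟩ := (htop.eventually (eventually_gt_atTop b)).exists
      obtain ⟨l, hl⟩ := (hbot.eventually (eventually_le_atBot b)).exists
      obtain ⟨n, hn₁, hn₂⟩ := Int.exists_greatest_of_bdd (P := fun z : ℤ => κ z ≤ b)
        ⟨k, fun z hzb => le_of_lt (hκ.lt_iff_lt.1 (lt_of_le_of_lt hzb hk))⟩ ⟨l, hl⟩
      exact ⟨n, hn₁, lt_of_not_ge fun hge => (Int.lt_succ _).not_ge (hn₂ _ hge)⟩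
    obtain ⟨g, -, hg, hga⟩ := (hφ j b ⟨hj1, hj2.le⟩).exists_analyticAt
    have hψg : ∀ x ∈ Ico b (κ (j + 1)), ψ x = g x := fun x hx => by
      rw [hψφ j x ⟨hj1.trans hx.1, hx.2⟩]
      exact hg (mem_insert_of_mem _ ⟨hj1.trans hx.1, hx.2.le⟩)
    have hsign : (∀ᶠ x in nhds b, b ≤ x → 0 ≤ g x) ∨ (∀ᶠ x in nhds b, b ≤ x → g x ≤ 0) := by
      by_cases h0 : ∀ᶠ z in nhds b, g z = 0
      · exact Or.inl (h0.mono fun x hx _ => hx.ge)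
      · obtain ⟨n, h, hh, hne, heq⟩ := hga.exists_eventuallyEq_pow_smul_nonzero_iff.2 h0
        rcases lt_or_gt_of_ne hne with hlt | hgt
        · right
          filter_upwards [heq, hh.continuousAt.eventually_lt_const hlt] with x hx hx2 hbx
          rw [hx, smul_eq_mul]
          exact mul_nonpos_of_nonneg_of_nonpos (pow_nonneg (sub_nonneg.2 hbx) n) hx2.le
        · left
          filter_upwards [heq, hh.continuousAt.eventually_const_lt hgt] with x hx hx2 hbx
          rw [hx, smul_eq_mul]
          exact mul_nonneg (pow_nonneg (sub_nonneg.2 hbx) n) hx2.le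
    have ext : ∀ P : ℝ → Prop, P 0 → (∀ᶠ x in nhds b, b ≤ x → P (g x)) →
        ∃ δ > 0, ∀ x ∈ Icc a (b + δ), P (ψ x) := by
      intro P hP0 hP
      obtain ⟨ε, hε, hball⟩ := Metric.eventually_nhds_iff.1
        (hP.and (eventually_lt_nhds hj2))
      refine ⟨ε / 2, half_pos hε, fun x hx => ?_⟩
      rcases le_or_gt x b with hxb | hxb
      · rw [hz x ⟨hx.1, hxb⟩]; exact hP0
      · have hdist : dist x b < ε := by
          rw [Real.dist_eq, abs_of_pos (sub_pos.2 hxb)]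
          linarith [hx.2]
        obtain ⟨h1, h2⟩ := hball hdist
        rw [hψg x ⟨hxb.le, h2⟩]
        exact h1 hxb.le
    rcases hsign with h | h
    · obtain ⟨δ, hδ, H⟩ := ext (fun y => 0 ≤ y) le_rfl h
      exact ⟨δ, hδ, Or.inl H⟩
    · obtain ⟨δ, hδ, H⟩ := ext (fun y => y ≤ 0) le_rfl h
      exact ⟨δ, hδ, Or.inr H⟩
  refine ⟨key, fun x₀ x₁ h01 hz hlub => ?_⟩
  obtain ⟨δ, hδ, H⟩ := key x₀ x₁ h01 hz
  have := hlub.1 (show x₁ + δ ∈ _ from ⟨by linarith, H⟩)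
  linarith
end
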